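/- If G is a simple graph (possibly disconnected) with u vertices of odd degree and g nonisolated vertices of even degree, then the edges of G can be partitioned into at most u/2 + ⌊(2/3)g⌋ paths. -/

import Mathlib

set_option linter.unusedSectionVars false
set_option linter.unusedTactic false
set_option linter.unusedVariables false

namespace PD
variable {V : Type*} [DecidableEq V]

/-- multiset of edges of a vertex list -/
def edg : List V → Multiset (Sym2 V)
  | [] => 0
  | [_] => 0
  | x :: y :: l => s(x, y) ::ₘ edg (y :: l)

/-- number of ends of the list at `v` -/
def ec (l : List V) (v : V) : ℕ :=
  (if l.head? = some v then 1 else 0) + (if l.getLast? = some v then 1 else 0)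

def Good (L : Multiset (List V)) : Prop := ∀ l ∈ L, l ≠ [] ∧ l.Nodup

def EL (L : Multiset (List V)) : Multiset (Sym2 V) := (L.map edg).sum

def DL (L : Multiset (List V)) (v : V) : ℕ := (L.map (fun l => ec l v)).sum

theorem edg_split (p : List V) (x : V) (q : List V) :
    edg (p ++ x :: q) = edg (p ++ [x]) + edg (x :: q) := by
  induction p with
  | nil => simp [edg]
  | cons u p ih =>
    cases p with
    | nil => simp [edg]
    | cons w p => simp only [List.cons_append, edg] at ih ⊢; rw [ih]; simp

theorem edg_reverse (l : List V) : edg l.reverse = edg l := by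
  induction l with
  | nil => simp
  | cons x l ih =>
    cases l with
    | nil => simp
    | cons y l =>
      have : (x :: y :: l).reverse = l.reverse ++ y :: [x] := by simp
      rw [this, edg_split]
      have h2 : l.reverse ++ [y] = (y :: l).reverse := by simp
      rw [h2, ih]
      simp only [edg]
      rw [Sym2.eq_swap (a := y) (b := x), add_comm, Multiset.cons_add, zero_add]

theorem ec_reverse (l : List V) (v : V) : ec l.reverse v = ec l v := by
  simp [ec, add_comm]

@[simp] theorem EL_cons (l : List V) (L : Multiset (List V)) : EL (l ::ₘ L) = edg l + EL L := by
  simp [EL]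

@[simp] theorem DL_cons (l : List V) (L : Multiset (List V)) (v : V) :
    DL (l ::ₘ L) v = ec l v + DL L v := by
  simp [DL]

theorem Good.of_cons {l : List V} {L : Multiset (List V)} (h : Good (l ::ₘ L)) :
    l ≠ [] ∧ l.Nodup ∧ Good L :=
  ⟨(h l (by simp)).1, (h l (by simp)).2, fun m hm => h m (by simp [hm])⟩

theorem Good.cons {l : List V} {L : Multiset (List V)} (h1 : l ≠ []) (h2 : l.Nodup)
    (h : Good L) : Good (l ::ₘ L) := by
  intro m hm
  rcases Multiset.mem_cons.1 hm with rfl | hm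
  · exact ⟨h1, h2⟩
  · exact h m hm

def Step (L : Multiset (List V)) (a x w : V) : Prop :=
  ∃ m ∈ L, ∃ r q, (m = (x :: r) ++ a :: q ∨ m.reverse = (x :: r) ++ a :: q) ∧
    (x :: r).getLast? = some w

def Reach (L : Multiset (List V)) (a : V) : ℕ → V → Prop
  | 0, x => ∃ m ∈ L, a ∉ m ∧ (m.head? = some x ∨ m.getLast? = some x)
  | n + 1, x => ∃ w, Step L a x w ∧ Reach L a n w

theorem step_ne {L : Multiset (List V)} {a x w : V} (hL : Good L) (h : Step L a x w) : w ≠ a := by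
  obtain ⟨m, hm, r, q, ho, hw⟩ := h
  have hn : ((x :: r) ++ a :: q).Nodup := by
    rcases ho with h | h
    · rw [← h]; exact (hL m hm).2
    · rw [← h]; exact List.nodup_reverse.2 (hL m hm).2
  have hw' : w ∈ x :: r := List.mem_of_getLast? hw
  rintro rfl
  have := List.disjoint_of_nodup_append hn
  exact this hw' (by simp)

theorem split_unique {a : V} {p q p' q' : List V} (h : p ++ a :: q = p' ++ a :: q')
    (hn : (p ++ a :: q).Nodup) : p = p' ∧ q = q' := by
  have h1 : a ∉ p := fun hh => (List.disjoint_of_nodup_append hn) hh (by simp)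
  have h2 : a ∉ p' := by
    rw [h] at hn
    exact fun hh => (List.disjoint_of_nodup_append hn) hh (by simp)
  induction p generalizing p' with
  | nil =>
    cases p' with
    | nil => simpa using h
    | cons u p' => simp at h h2; exact absurd h.1 h2.1
  | cons u p ih =>
    cases p' with
    | nil => simp at h h1; exact absurd h.1.symm h1.1
    | cons u' p' =>
      simp only [List.cons_append, List.cons.injEq] at h
      simp only [List.mem_cons, not_or] at h1 h2
      have := ih h.2 (by simp only [List.cons_append, List.nodup_cons] at hn; exact hn.2) h1.2 h2.2
      exact ⟨by rw [h.1, this.1], this.2⟩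

theorem persist {L0 : Multiset (List V)} {l : List V} {a x : V} {r q : List V}
    (hL : Good (l ::ₘ L0))
    (ho : l = (x :: r) ++ a :: q ∨ l.reverse = (x :: r) ++ a :: q) (n : ℕ) :
    ∀ w, w ≠ a → Reach (l ::ₘ L0) a n w → (∀ m ≤ n, ¬ Reach (l ::ₘ L0) a m x) →
      Reach (((x :: r).reverse ++ a :: q) ::ₘ L0) a n w := by
  have hal : a ∈ l := by
    rcases ho with h | h
    · rw [h]; simp
    · rw [← List.mem_reverse, h]; simp
  have hn : ((x :: r) ++ a :: q).Nodup := by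
    rcases ho with h | h
    · rw [← h]; exact hL.of_cons.2.1
    · rw [← h]; exact List.nodup_reverse.2 hL.of_cons.2.1
  induction n with
  | zero =>
    rintro w - ⟨m, hm, ham, he⟩ -
    rcases Multiset.mem_cons.1 hm with rfl | hm
    · exact absurd hal ham
    · exact ⟨m, by simp [hm], ham, he⟩
  | succ n ih =>
    rintro w hwa ⟨w1, hst, hre⟩ hno
    refine ⟨w1, ?_, ih w1 (step_ne hL hst) hre (fun m hm => hno m (by omega))⟩
    have hst' := hst
    obtain ⟨m, hm, r1, q1, ho1, hw1⟩ := hst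
    rcases Multiset.mem_cons.1 hm with rfl | hm
    · -- same path
      have key : (x :: r) ++ a :: q = (w :: r1) ++ a :: q1 ∨
          ((x :: r) ++ a :: q).reverse = (w :: r1) ++ a :: q1 := by
        rcases ho with h | h <;> rcases ho1 with h1 | h1
        · left; rw [← h, ← h1]
        · right; rw [← h, ← h1]
        · right; rw [← h, ← h1]; simp
        · left; rw [← h, ← h1]
      rcases key with h | h
      · have : x = w := by simpa using (split_unique h hn).1 |> fun t => (List.cons.inj t).1
        subst this
        exact absurd ⟨w1, hst', hre⟩ (hno (n + 1) le_rfl)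
      · have h' : q.reverse ++ a :: (x :: r).reverse = (w :: r1) ++ a :: q1 := by
          rw [← h]; simp
        have hn' : (q.reverse ++ a :: (x :: r).reverse).Nodup := by
          rw [h', ← h]; exact List.nodup_reverse.2 hn
        have hu := split_unique h' hn'
        refine ⟨_, Multiset.mem_cons_self _ _, r1, x :: r, Or.inr ?_, hw1⟩
        rw [← hu.1]; simp
    · exact ⟨m, by simp [hm], r1, q1, ho1, hw1⟩

theorem augment {a : V} (n : ℕ) : ∀ (L : Multiset (List V)) (x : V), Good L → x ≠ a →
    Reach L a n x → ∃ L', Good L' ∧ Multiset.card L' = Multiset.card L ∧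
      EL L' = s(a, x) ::ₘ EL L ∧
      ∀ v, DL L' v + (if v = x then 1 else 0) = DL L v + (if v = a then 1 else 0) := by
  induction n using Nat.strong_induction_on with
  | _ n ih =>
    intro L x hL hxa hre
    by_cases hmin : ∃ m < n, Reach L a m x
    · obtain ⟨m, hm, hr⟩ := hmin
      exact ih m hm L x hL hxa hr
    push Not at hmin
    cases n with
    | zero =>
      obtain ⟨m, hm, ham, he⟩ := hre
      obtain ⟨L0, rfl⟩ := Multiset.exists_cons_of_mem hm
      have hg := hL.of_cons
      -- orient
      obtain ⟨o, ho1, ho2, hoe, hoc, t, hot⟩ : ∃ o : List V, a ∉ o ∧ o.Nodup ∧ edg o = edg m ∧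
          (∀ v, ec o v = ec m v) ∧ ∃ t, o = x :: t := by
        rcases he with h | h
        · refine ⟨m, ham, hg.2.1, rfl, fun _ => rfl, ?_⟩
          exact ⟨m.tail, (List.cons_head?_tail h).symm⟩
        · refine ⟨m.reverse, by simpa using ham, List.nodup_reverse.2 hg.2.1, edg_reverse m,
            ec_reverse m, m.reverse.tail, ?_⟩
          refine (List.cons_head?_tail ?_).symm
          rw [List.head?_reverse]; exact h
      refine ⟨(a :: o) ::ₘ L0, Good.cons (by simp) (List.nodup_cons.2 ⟨ho1, ho2⟩) hg.2.2, by simp,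
        ?_, ?_⟩
      · rw [EL_cons, EL_cons, ← hoe, hot]; simp [edg]
      · intro v
        rw [DL_cons, DL_cons, ← hoc v, hot]
        simp only [ec, List.head?_cons, Option.some.injEq, List.getLast?_cons_cons]
        simp only [eq_comm (a := v)]
        omega
    | succ n =>
      obtain ⟨w, hst, hrw⟩ := hre
      have hwa := step_ne hL hst
      obtain ⟨l, hl, r, q, ho, hw⟩ := hst
      obtain ⟨L0, rfl⟩ := Multiset.exists_cons_of_mem hl
      have hg := hL.of_cons
      have hn : ((x :: r) ++ a :: q).Nodup := by
        rcases ho with h | h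
        · rw [← h]; exact hg.2.1
        · rw [← h]; exact List.nodup_reverse.2 hg.2.1
      have hoe : edg l = edg ((x :: r) ++ a :: q) := by
        rcases ho with h | h
        · rw [h]
        · rw [← h, edg_reverse]
      have hoc : ∀ v, ec l v = ec ((x :: r) ++ a :: q) v := by
        intro v
        rcases ho with h | h
        · rw [h]
        · rw [← h, ec_reverse]
      have hp := persist hL ho n w hwa hrw (fun m hm => hmin m (by omega))
      have hgood : Good (((x :: r).reverse ++ a :: q) ::ₘ L0) := by
        refine Good.cons (by simp) ?_ hg.2.2
        refine (List.Perm.nodup_iff ?_).2 hn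
        exact (List.reverse_perm _).append_right _
      obtain ⟨L', h1, h2, h3, h4⟩ := ih n (by omega) _ w hgood hwa hp
      refine ⟨L', h1, by rw [h2]; simp, ?_, ?_⟩
      · rw [h3, EL_cons, EL_cons, hoe]
        -- decompose (x::r) = p ++ [w]
        obtain ⟨p, hpw⟩ : ∃ p, x :: r = p ++ [w] := by
          rw [List.getLast?_eq_some_iff] at hw; exact hw
        have e1 : edg ((x :: r) ++ a :: q) = edg (x :: r) + (s(w, a) ::ₘ edg (a :: q)) := by
          rw [hpw, List.append_assoc]
          have : p ++ ([w] ++ a :: q) = p ++ w :: (a :: q) := by simp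
          rw [this, edg_split]; rfl
        have e2 : edg ((x :: r).reverse ++ a :: q) = edg (x :: r) + (s(x, a) ::ₘ edg (a :: q)) := by
          have : (x :: r).reverse ++ a :: q = r.reverse ++ x :: (a :: q) := by simp
          rw [this, edg_split]
          have h5 : r.reverse ++ [x] = (x :: r).reverse := by simp
          rw [h5, edg_reverse]; rfl
        rw [e1, e2]
        rw [Sym2.eq_swap (a := a) (b := w), Sym2.eq_swap (a := a) (b := x)]
        simp only [Multiset.add_cons, Multiset.cons_add]
        rw [Multiset.cons_swap]
      · intro v
        have := h4 v
        rw [DL_cons] at this ⊢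
        rw [hoc v]
        have hh : ((x :: r).reverse ++ a :: q).head? = some w := by
          rw [List.head?_append, List.head?_reverse, hw]; rfl
        have hlst : ((x :: r).reverse ++ a :: q).getLast? = ((x :: r) ++ a :: q).getLast? := by
          rw [List.getLast?_append, List.getLast?_append]; simp only [List.getLast?_cons, Option.some_or]
        simp only [ec, hh, hlst] at this ⊢
        simp only [List.cons_append, List.head?_cons, Option.some.injEq] at this ⊢
        simp only [eq_comm (a := w) (b := v), eq_comm (a := x) (b := v)] at this ⊢
        omega

end PD

namespace PD
variable {V : Type*} [DecidableEq V]

theorem side_bound {L : Multiset (List V)} {a : V} {S : Finset V} {m : List V} {p q : List V}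
    (hm : m ∈ L) (ho : m = p ++ a :: q ∨ m.reverse = p ++ a :: q)
    (hS : ∀ x w, x ∈ S → Step L a x w → w ∈ S) (ha : a ∉ S) :
    (∑ v ∈ S, if (p ++ [a]).head? = some v then 1 else 0) ≤
      ∑ b ∈ S, (edg (p ++ [a])).count s(a, b) := by
  cases p with
  | nil =>
    have : (∑ v ∈ S, if ([] ++ [a]).head? = some v then 1 else 0) = 0 := by
      apply Finset.sum_eq_zero
      intro v hv
      simp; rintro rfl; exact ha hv
    rw [this]; exact Nat.zero_le _
  | cons x r =>
    by_cases hx : x ∈ S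
    · have h1 : (∑ v ∈ S, if ((x :: r) ++ [a]).head? = some v then 1 else 0) = 1 := by
        simp [hx]
      rw [h1]
      obtain ⟨w, hw⟩ : ∃ w, (x :: r).getLast? = some w := by
        simp [List.getLast?_cons]
      have hst : Step L a x w := ⟨m, hm, r, q, ho, hw⟩
      have hwS := hS x w hx hst
      obtain ⟨pp, hp⟩ : ∃ p, x :: r = p ++ [w] := by
        rw [List.getLast?_eq_some_iff] at hw; exact hw
      have h2 : 1 ≤ (edg ((x :: r) ++ [a])).count s(a, w) := by
        rw [Multiset.one_le_count_iff_mem, hp]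
        have : pp ++ [w] ++ [a] = pp ++ w :: [a] := by simp
        rw [this, edg_split]
        simp [edg, Sym2.eq_swap]
      exact h2.trans (Finset.single_le_sum (f := fun b => (edg ((x :: r) ++ [a])).count s(a, b))
        (fun _ _ => Nat.zero_le _) hwS)
    · have h1 : (∑ v ∈ S, if ((x :: r) ++ [a]).head? = some v then 1 else 0) = 0 := by
        simp [hx]
      rw [h1]; exact Nat.zero_le _

theorem reach_exists [Fintype V] {L : Multiset (List V)} {F : Finset (Sym2 V)} {a : V}
    {T : Finset V} (hL : Good L) (hE : EL L = F.val) (haT : a ∉ T)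
    (hT : ∀ x ∈ T, s(a, x) ∉ F)
    (hc : (Finset.univ.filter fun v => s(a, v) ∈ F ∧ DL L v = 0).card < ∑ x ∈ T, DL L x) :
    ∃ x ∈ T, ∃ n, Reach L a n x := by
  classical
  by_contra hcon
  push Not at hcon
  set S : Finset V := Finset.univ.filter fun v => ∃ x ∈ T, Relation.ReflTransGen (Step L a) x v
    with hSdef
  have hTS : T ⊆ S := by
    intro x hx; simp only [hSdef, Finset.mem_filter, Finset.mem_univ, true_and]
    exact ⟨x, hx, Relation.ReflTransGen.refl⟩
  have hS : ∀ x w, x ∈ S → Step L a x w → w ∈ S := by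
    intro x w hx hst
    simp only [hSdef, Finset.mem_filter, Finset.mem_univ, true_and] at hx ⊢
    obtain ⟨y, hy, h⟩ := hx
    exact ⟨y, hy, h.tail hst⟩
  have haS : a ∉ S := by
    simp only [hSdef, Finset.mem_filter, Finset.mem_univ, true_and]
    rintro ⟨x, hx, h⟩
    rcases Relation.ReflTransGen.cases_tail h with h | ⟨b, _, h⟩
    · subst h; exact haT hx
    · exact step_ne hL h rfl
  have hnr : ∀ v ∈ S, ∀ n, ¬ Reach L a n v := by
    intro v hv
    simp only [hSdef, Finset.mem_filter, Finset.mem_univ, true_and] at hv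
    obtain ⟨x, hx, h⟩ := hv
    intro n hn
    have key : ∀ y, Relation.ReflTransGen (Step L a) y v → ∃ k, Reach L a k y := by
      intro y hy
      induction hy using Relation.ReflTransGen.head_induction_on with
      | refl => exact ⟨n, hn⟩
      | head h1 h2 ih =>
        obtain ⟨k, hk⟩ := ih
        exact ⟨k + 1, _, h1, hk⟩
    obtain ⟨k, hk⟩ := key x h
    exact hcon x hx k hk
  have hper : ∀ m ∈ L, ∑ v ∈ S, ec m v ≤ ∑ b ∈ S, (edg m).count s(a, b) := by
    intro m hm
    by_cases ham : a ∈ m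
    · obtain ⟨p, q, hpq⟩ := List.append_of_mem ham
      have b1 := side_bound (p := p) (q := q) hm (Or.inl hpq) hS haS
      have b2 := side_bound (p := q.reverse) (q := p.reverse) hm
        (Or.inr (by rw [hpq]; simp)) hS haS
      have e1 : m.head? = (p ++ [a]).head? := by
        rw [hpq]; cases p <;> simp
      have e2 : m.getLast? = (q.reverse ++ [a]).head? := by
        rw [hpq, ← List.head?_reverse]
        simp [List.head?_append]
      have e3 : edg m = edg (p ++ [a]) + edg (q.reverse ++ [a]) := by
        rw [hpq, edg_split]
        congr 1
        rw [← edg_reverse]; simp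
      simp only [ec, e1, e2, e3, Multiset.count_add, Finset.sum_add_distrib]
      exact Nat.add_le_add b1 b2
    · have : ∑ v ∈ S, ec m v = 0 := by
        apply Finset.sum_eq_zero
        intro v hv
        have h0 := hnr v hv 0
        simp only [Reach] at h0
        push Not at h0
        have h1 := h0 m hm ham
        simp [ec, h1.1, h1.2]
      rw [this]; exact Nat.zero_le _
  have hsum : ∀ L' : Multiset (List V), (∀ m ∈ L', m ∈ L) →
      ∑ v ∈ S, DL L' v ≤ ∑ b ∈ S, (EL L').count s(a, b) := by
    intro L'
    induction L' using Multiset.induction_on with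
    | empty => simp [DL]
    | cons m L' ih =>
      intro h
      simp only [DL_cons, EL_cons, Multiset.count_add, Finset.sum_add_distrib]
      exact Nat.add_le_add (hper m (h m (by simp))) (ih fun m' hm' => h m' (by simp [hm']))
  have h1 := hsum L fun _ h => h
  rw [hE] at h1
  have h2 : ∀ b, F.val.count s(a, b) = if s(a, b) ∈ F then 1 else 0 := by
    intro b
    rw [Multiset.count_eq_of_nodup F.nodup]; rfl
  simp only [h2] at h1
  rw [← Finset.sum_sdiff hTS, ← Finset.sum_sdiff hTS] at h1
  have h3 : (∑ b ∈ T, if s(a, b) ∈ F then 1 else 0) = 0 := by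
    apply Finset.sum_eq_zero
    intro b hb; simp [hT b hb]
  rw [h3] at h1
  have h4 : (∑ b ∈ S \ T, if s(a, b) ∈ F then 1 else 0) ≤
      ∑ b ∈ S \ T, (DL L b + if s(a, b) ∈ F ∧ DL L b = 0 then 1 else 0) := by
    apply Finset.sum_le_sum
    intro b _
    by_cases hb : DL L b = 0 <;> by_cases hf : s(a, b) ∈ F <;> simp [hb, hf]
    omega
  rw [Finset.sum_add_distrib] at h4
  have h5 : (∑ b ∈ S \ T, if s(a, b) ∈ F ∧ DL L b = 0 then 1 else 0) ≤
      (Finset.univ.filter fun v => s(a, v) ∈ F ∧ DL L v = 0).card := by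
    rw [Finset.card_filter]
    exact Finset.sum_le_sum_of_subset (Finset.subset_univ _)
  omega

/-- `F` can be decomposed into at most `N` lists with at least `f v` ends at `v`. -/
def Dec (F : Finset (Sym2 V)) (f : V → ℕ) (N : ℕ) : Prop :=
  ∃ L : Multiset (List V), Good L ∧ EL L = F.val ∧ (∀ v, f v ≤ DL L v) ∧ Multiset.card L ≤ N

theorem Dec.mono {F : Finset (Sym2 V)} {f f' : V → ℕ} {N N' : ℕ} (h : Dec F f N)
    (hf : ∀ v, f' v ≤ f v) (hN : N ≤ N') : Dec F f' N' := by
  obtain ⟨L, h1, h2, h3, h4⟩ := h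
  exact ⟨L, h1, h2, fun v => (hf v).trans (h3 v), h4.trans hN⟩

theorem absorb_one [Fintype V] {F : Finset (Sym2 V)} {f : V → ℕ} {N : ℕ} {a : V} {T : Finset V}
    (h : Dec F f N) (haT : a ∉ T) (hT : ∀ x ∈ T, s(a, x) ∉ F)
    (hc : (Finset.univ.filter fun v => s(a, v) ∈ F ∧ f v = 0).card < ∑ x ∈ T, f x) :
    ∃ x ∈ T, Dec (insert s(a, x) F)
      (fun v => if v = x then f v - 1 else if v = a then f v + 1 else f v) N := by
  obtain ⟨L, h1, h2, h3, h4⟩ := h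
  obtain ⟨x, hx, n, hr⟩ := reach_exists h1 h2 haT hT (lt_of_le_of_lt
    (Finset.card_le_card (by
      intro v; simp only [Finset.mem_filter, Finset.mem_univ, true_and]
      rintro ⟨h5, h6⟩
      exact ⟨h5, by have := h3 v; omega⟩)) (lt_of_lt_of_le hc
        (Finset.sum_le_sum fun v _ => h3 v)))
  have hxa : x ≠ a := by rintro rfl; exact haT hx
  obtain ⟨L', g1, g2, g3, g4⟩ := augment n L x h1 hxa hr
  refine ⟨x, hx, L', g1, ?_, ?_, by omega⟩
  · rw [g3, h2, Finset.insert_val_of_notMem (hT x hx)]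
  · intro v
    have := g4 v
    have := h3 v
    show (if v = x then f v - 1 else if v = a then f v + 1 else f v) ≤ DL L' v
    by_cases c1 : v = x
    · have c2 : v ≠ a := by rw [c1]; exact hxa
      simp only [if_pos c1, if_neg c2] at *
      omega
    · by_cases c2 : v = a
      · simp only [if_neg c1, if_pos c2] at *
        omega
      · simp only [if_neg c1, if_neg c2] at *
        omega

end PD

namespace PD
variable {V : Type*} [DecidableEq V]

def star (a : V) (T : Finset V) : Finset (Sym2 V) := T.image (fun x => s(a, x))

theorem mem_star {a : V} {T : Finset V} {e : Sym2 V} : e ∈ star a T ↔ ∃ x ∈ T, s(a, x) = e := by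
  simp [star]

theorem mk_mem_star {a x : V} {T : Finset V} : s(a, x) ∈ star a T ↔ x ∈ T := by
  simp only [star, Finset.mem_image, Sym2.congr_right, exists_eq_right]

theorem mk_mem_star' {a v x : V} {T : Finset V} :
    s(v, x) ∈ star a T ↔ (v = a ∧ x ∈ T) ∨ (x = a ∧ v ∈ T) := by
  simp only [star, Finset.mem_image, Sym2.eq_iff]
  constructor
  · rintro ⟨w, hw, ⟨rfl, rfl⟩ | ⟨rfl, rfl⟩⟩
    · exact Or.inl ⟨rfl, hw⟩
    · exact Or.inr ⟨rfl, hw⟩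
  · rintro (⟨rfl, h⟩ | ⟨rfl, h⟩)
    · exact ⟨x, h, Or.inl ⟨rfl, rfl⟩⟩
    · exact ⟨v, h, Or.inr ⟨rfl, rfl⟩⟩

theorem star_insert (a x : V) (T : Finset V) : star a (insert x T) = insert s(a, x) (star a T) := by
  simp [star]

theorem star_union (a : V) (S T : Finset V) : star a (S ∪ T) = star a S ∪ star a T := by
  simp [star, Finset.image_union]

theorem star_empty (a : V) : star a (∅ : Finset V) = ∅ := by simp [star]

theorem star_absorb [Fintype V] (k : ℕ) : ∀ {F : Finset (Sym2 V)} {f : V → ℕ} {N : ℕ} {a : V}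
    {T : Finset V} (ζ : ℕ), T.card = k →
    Dec F f N → a ∉ T → (∀ x ∈ T, s(a, x) ∉ F) → (∀ x ∈ T, 1 ≤ f x) →
    (Finset.univ.filter fun v => s(a, v) ∈ F ∧ f v = 0).card ≤ ζ →
    ∃ S ⊆ T, 2 * (T \ S).card ≤ T.card + ζ ∧ Dec (F ∪ star a S)
      (fun v => if v ∈ S then 0 else if v = a then f v + S.card else f v) N := by
  induction k with
  | zero =>
    intro F f N a T ζ hk h haT hT hf hz
    refine ⟨∅, by simp, by simp [hk], ?_⟩
    rw [star_empty, Finset.union_empty]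
    exact h.mono (by intro v; simp) le_rfl
  | succ k ih =>
    intro F f N a T ζ hk h haT hT hf hz
    by_cases hle : T.card ≤ ζ
    · refine ⟨∅, by simp, by simp; omega, ?_⟩
      rw [star_empty, Finset.union_empty]
      exact h.mono (by intro v; simp) le_rfl
    have hs : T.card ≤ ∑ x ∈ T, f x := by
      rw [Finset.card_eq_sum_ones]; exact Finset.sum_le_sum hf
    obtain ⟨x, hx, hd⟩ := absorb_one h haT hT (by omega)
    have hxa : x ≠ a := by rintro rfl; exact haT hx
    have hc1 : (T.erase x).card = k := by rw [Finset.card_erase_of_mem hx]; omega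
    obtain ⟨S, hS, hcard, hd2⟩ := ih (F := insert s(a, x) F)
      (f := fun v => if v = x then 0 else if v = a then f v + 1 else f v) (N := N) (a := a)
      (T := T.erase x) (ζ + 1) hc1
      (hd.mono (by intro v; beta_reduce; split_ifs <;> omega) le_rfl)
      (fun hh => haT (Finset.mem_of_mem_erase hh))
      (by
        intro y hy
        have hy1 := Finset.mem_erase.1 hy
        simp only [Finset.mem_insert, not_or]
        refine ⟨?_, hT y hy1.2⟩
        intro he
        exact hy1.1 (Sym2.congr_right.1 he))
      (by
        intro y hy
        have hy1 := Finset.mem_erase.1 hy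
        have hya : y ≠ a := by rintro rfl; exact haT hy1.2
        simp only [if_neg hy1.1, if_neg hya]
        exact hf y hy1.2)
      (by
        refine le_trans (Finset.card_le_card (t := insert x
          (Finset.univ.filter fun v => s(a, v) ∈ F ∧ f v = 0)) ?_)
          ((Finset.card_insert_le _ _).trans (by omega))
        intro v
        simp only [Finset.mem_filter, Finset.mem_univ, true_and, Finset.mem_insert]
        rintro ⟨h1, h2⟩
        by_cases hvx : v = x
        · exact Or.inl hvx
        · right
          simp only [if_neg hvx] at h2
          refine ⟨?_, by split_ifs at h2; omega⟩
          rcases h1 with h1 | h1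
          · exact absurd (Sym2.congr_right.1 h1) hvx
          · exact h1)
    have hxS : x ∉ S := fun hh => (Finset.mem_erase.1 (hS hh)).1 rfl
    refine ⟨insert x S, ?_, ?_, ?_⟩
    · intro y hy
      rcases Finset.mem_insert.1 hy with rfl | hy
      · exact hx
      · exact Finset.mem_of_mem_erase (hS hy)
    · have : T \ insert x S = T.erase x \ S := by
        ext y; simp; tauto
      rw [this]; omega
    · have : F ∪ star a (insert x S) = insert s(a, x) F ∪ star a S := by
        rw [star_insert]; simp
      rw [this]
      refine hd2.mono ?_ le_rfl
      intro v
      simp only [Finset.mem_insert]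
      have hsc : (insert x S).card = S.card + 1 := Finset.card_insert_of_notMem hxS
      rw [hsc]
      by_cases h1 : v = x
      · simp only [h1, true_or, if_true, Nat.zero_le]
      by_cases h2 : v ∈ S
      · simp only [h2, or_true, if_true, Nat.zero_le]
      simp only [h1, h2, or_self, if_false]
      split_ifs <;> omega

/-- outcome of paying for three tokens at `a` with one new list -/
def Pay3 (L : Multiset (List V)) (a v1 v2 v3 : V) : Prop :=
  ∃ L', Good L' ∧ Multiset.card L' = Multiset.card L + 1 ∧
    EL L' = s(a, v1) ::ₘ s(a, v2) ::ₘ s(a, v3) ::ₘ EL L ∧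
    ∀ v, DL L v ≤ DL L' v + (if v = a then 1 else 0)

theorem Pay3.swap12 {L : Multiset (List V)} {a v1 v2 v3 : V} (h : Pay3 L a v1 v2 v3) :
    Pay3 L a v2 v1 v3 := by
  obtain ⟨L', h1, h2, h3, h4⟩ := h
  exact ⟨L', h1, h2, by rw [h3, Multiset.cons_swap], h4⟩

theorem Pay3.swap23 {L : Multiset (List V)} {a v1 v2 v3 : V} (h : Pay3 L a v1 v2 v3) :
    Pay3 L a v1 v3 v2 := by
  obtain ⟨L', h1, h2, h3, h4⟩ := h
  exact ⟨L', h1, h2, by rw [h3, Multiset.cons_swap s(a, v2)], h4⟩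

theorem pay3_free {L0 : Multiset (List V)} {l : List V} {a x y z : V} {q : List V}
    (hL : Good L0) (hn : (a :: q).Nodup) (he : edg l = edg (a :: q))
    (hc : ∀ v, ec l v = ec (a :: q) v) (hxa : x ≠ a) (hya : y ≠ a) (hza : z ≠ a)
    (hyz : y ≠ z) (hx : x ∉ q) : Pay3 (l ::ₘ L0) a x y z := by
  refine ⟨(x :: a :: q) ::ₘ [y, a, z] ::ₘ L0, ?_, by simp, ?_, ?_⟩
  · refine Good.cons (by simp) ?_ (Good.cons (by simp) ?_ hL)
    · simp only [List.nodup_cons, List.mem_cons, not_or] at hn ⊢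
      exact ⟨⟨hxa, hx⟩, hn⟩
    · simp [hya, hyz, hza.symm]
  · simp only [EL_cons, he, edg]
    rw [Sym2.eq_swap (a := x), Sym2.eq_swap (a := y)]
    simp only [Multiset.cons_add, zero_add, Multiset.add_cons]
    rw [Multiset.cons_swap s(a, z) s(a, x), Multiset.cons_swap s(a, y) s(a, x)]
  · intro v
    simp only [DL_cons, hc]
    simp only [ec, List.head?_cons, List.getLast?_cons_cons, Option.some.injEq]
    simp only [eq_comm (a := v)]
    omega

theorem pay3_mid {L0 : Multiset (List V)} {l : List V} {a x y z : V} {A B : List V}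
    (hL : Good L0) (hn : (a :: (A ++ y :: B)).Nodup) (he : edg l = edg (a :: (A ++ y :: B)))
    (hc : ∀ v, ec l v = ec (a :: (A ++ y :: B)) v) (hx : x ∈ A) (hz : z ∈ B) :
    Pay3 (l ::ₘ L0) a x y z := by
  have hn1 := List.nodup_cons.1 hn
  have hn2 := List.nodup_append.1 hn1.2
  have hn3 := List.nodup_cons.1 hn2.2.1
  have haA : a ∉ A := fun h => hn1.1 (by simp [h])
  have haB : a ∉ B := fun h => hn1.1 (by simp [h])
  have hay : a ≠ y := fun h => hn1.1 (by simp [h])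
  have hdis : ∀ u ∈ A, ∀ w ∈ B, u ≠ w := fun u hu w hw => hn2.2.2 u hu w (by simp [hw])
  have hyA : y ∉ A := fun h => hn2.2.2 y h y (by simp) rfl
  have hza : z ≠ a := fun h => haB (h ▸ hz)
  have hxa : x ≠ a := fun h => haA (h ▸ hx)
  have hzA : z ∉ A := fun h => hdis z h z hz rfl
  have hxB : x ∉ B := fun h => hdis x hx x h rfl
  have hzy : z ≠ y := fun h => hn3.1 (h ▸ hz)
  have hxy : x ≠ y := fun h => hyA (h ▸ hx)
  refine ⟨(z :: a :: (A ++ [y])) ::ₘ (x :: a :: y :: B) ::ₘ L0, ?_, by simp, ?_, ?_⟩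
  · refine Good.cons (by simp) ?_ (Good.cons (by simp) ?_ hL)
    · rw [List.nodup_cons, List.nodup_cons, List.nodup_append]
      refine ⟨by simp [hza, hzA, hzy], by simp [haA, hay], hn2.1, by simp, ?_⟩
      intro u hu w hw
      simp at hw; subst hw
      exact fun h => hyA (h ▸ hu)
    · rw [List.nodup_cons, List.nodup_cons]
      exact ⟨by simp [hxa, hxy, hxB], by simp [hay, haB], hn2.2.1⟩
  · have e1 : edg (a :: (A ++ y :: B)) = edg (a :: (A ++ [y])) + edg (y :: B) := by
      have := edg_split (a :: A) y B
      simpa using this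
    simp only [EL_cons, he, e1]
    simp only [edg]
    rw [Sym2.eq_swap (a := x), Sym2.eq_swap (a := z)]
    simp only [Multiset.cons_add, Multiset.add_cons]
    rw [add_assoc]
  · intro v
    simp only [DL_cons, hc]
    have e2 : (a :: (A ++ y :: B)).getLast? = (y :: B).getLast? := by
      rw [List.getLast?_cons, List.getLast?_append]; simp [List.getLast?_cons]
    simp only [ec, e2]
    simp only [List.head?_cons, List.getLast?_cons_cons, Option.some.injEq]
    simp only [eq_comm (a := v)]
    omega

theorem pay3_all {L0 : Multiset (List V)} {l : List V} {a x y z : V} {q : List V}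
    (hL : Good L0) (hn : (a :: q).Nodup) (he : edg l = edg (a :: q))
    (hc : ∀ v, ec l v = ec (a :: q) v) (hxa : x ≠ a) (hya : y ≠ a) (hza : z ≠ a)
    (hxy : x ≠ y) (hxz : x ≠ z) (hyz : y ≠ z) : Pay3 (l ::ₘ L0) a x y z := by
  by_cases hx : x ∉ q
  · exact pay3_free hL hn he hc hxa hya hza hyz hx
  by_cases hy : y ∉ q
  · exact (pay3_free hL hn he hc hya hxa hza hxz hy).swap12
  by_cases hz : z ∉ q
  · exact (pay3_free hL hn he hc hza hxa hya hxy hz).swap12.swap23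
  push Not at hx hy hz
  obtain ⟨A, B, rfl⟩ := List.append_of_mem hy
  have hx' : x ∈ A ∨ x ∈ B := by simpa [hxy] using hx
  have hz' : z ∈ A ∨ z ∈ B := by simpa [hyz.symm] using hz
  rcases hx' with hx' | hx' <;> rcases hz' with hz' | hz'
  · obtain ⟨A1, A2, rfl⟩ := List.append_of_mem hx'
    have : z ∈ A1 ∨ z ∈ A2 := by simpa [hxz.symm] using hz'
    rcases this with h | h
    · -- order z x y
      have := pay3_mid (A := A1) (y := x) (B := A2 ++ y :: B) (x := z) (z := y) hL
        (by simpa using hn) (by simpa using he) (by simpa using hc) h (by simp)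
      exact this.swap12.swap23
    · obtain ⟨A3, A4, rfl⟩ := List.append_of_mem h
      -- order x z y
      have := pay3_mid (A := A1 ++ x :: A3) (y := z) (B := A4 ++ y :: B) (x := x) (z := y) hL
        (by simpa using hn) (by simpa using he) (by simpa using hc) (by simp) (by simp)
      exact this.swap23
  · exact pay3_mid hL hn he hc hx' hz'
  · exact (pay3_mid hL hn he hc hz' hx').swap12.swap23.swap12
  · obtain ⟨B1, B2, rfl⟩ := List.append_of_mem hx'
    have : z ∈ B1 ∨ z ∈ B2 := by simpa [hxz.symm] using hz'
    rcases this with h | h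
    · obtain ⟨B3, B4, rfl⟩ := List.append_of_mem h
      -- order y z x
      have := pay3_mid (A := A ++ y :: B3) (y := z) (B := B4 ++ x :: B2) (x := y) (z := x) hL
        (by simpa using hn) (by simpa using he) (by simpa using hc) (by simp) (by simp)
      exact this.swap23.swap12
    · -- order y x z
      have := pay3_mid (A := A ++ y :: B1) (y := x) (B := B2) (x := y) (z := z) hL
        (by simpa using hn) (by simpa using he) (by simpa using hc) (by simp) h
      exact this.swap12

theorem pay3 {L : Multiset (List V)} {a x y z : V} (hL : Good L) (ha : 1 ≤ DL L a)
    (hxa : x ≠ a) (hya : y ≠ a) (hza : z ≠ a)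
    (hxy : x ≠ y) (hxz : x ≠ z) (hyz : y ≠ z) : Pay3 L a x y z := by
  obtain ⟨l, hl, hla⟩ : ∃ l ∈ L, 1 ≤ ec l a := by
    by_contra hcon
    push Not at hcon
    have : DL L a = 0 := by
      rw [DL, Multiset.sum_eq_zero_iff]
      intro k hk
      obtain ⟨l, hl, rfl⟩ := Multiset.mem_map.1 hk
      have := hcon l hl
      omega
    omega
  obtain ⟨L0, rfl⟩ := Multiset.exists_cons_of_mem hl
  have hg := hL.of_cons
  have he : l.head? = some a ∨ l.getLast? = some a := by
    by_contra hh
    push Not at hh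
    simp [ec, hh.1, hh.2] at hla
  rcases he with h | h
  · have hl2 := (List.cons_head?_tail h).symm
    exact pay3_all (q := l.tail) hg.2.2 (by rw [← hl2]; exact hg.2.1) (by rw [← hl2])
      (fun _ => by rw [← hl2]) hxa hya hza hxy hxz hyz
  · have h' : l.reverse.head? = some a := by rw [List.head?_reverse]; exact h
    have hl2 := (List.cons_head?_tail h').symm
    refine pay3_all (q := l.reverse.tail) hg.2.2 ?_ ?_ ?_ hxa hya hza hxy hxz hyz
    · rw [← hl2]; exact List.nodup_reverse.2 hg.2.1
    · rw [← hl2, edg_reverse]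
    · intro v; rw [← hl2, ec_reverse]

theorem Dec.addPath {F : Finset (Sym2 V)} {f : V → ℕ} {N : ℕ} (h : Dec F f N) (p : List V)
    (hp : p ≠ []) (hn : p.Nodup) (E : Finset (Sym2 V)) (hE : edg p = E.val)
    (hd : Disjoint E F) : Dec (F ∪ E) (fun v => f v + ec p v) (N + 1) := by
  obtain ⟨L, h1, h2, h3, h4⟩ := h
  refine ⟨p ::ₘ L, Good.cons hp hn h1, ?_, ?_, by simpa using h4⟩
  · rw [EL_cons, h2, hE, Finset.union_comm, ← Finset.disjUnion_eq_union _ _ hd]; rfl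
  · intro v
    rw [DL_cons]; have := h3 v; dsimp only; omega

theorem pay_small {F : Finset (Sym2 V)} {f : V → ℕ} {N : ℕ} {a : V} {R : Finset V}
    (h : Dec F f N) (haR : a ∉ R) (hR : ∀ x ∈ R, s(a, x) ∉ F) (hc : R.card ≤ 2) :
    Dec (F ∪ star a R) f (N + 1) := by
  have h3 : R.card = 0 ∨ R.card = 1 ∨ R.card = 2 := by omega
  rcases h3 with h3 | h3 | h3
  · rw [Finset.card_eq_zero] at h3; subst h3
    rw [star_empty, Finset.union_empty]; exact h.mono (fun _ => le_rfl) (by omega)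
  · obtain ⟨x, rfl⟩ := Finset.card_eq_one.1 h3
    have hxa : x ≠ a := by rintro rfl; simp at haR
    have hx := hR x (by simp)
    refine (h.addPath [a, x] (by simp) (by simp [hxa.symm]) (star a {x}) ?_ ?_).mono
      (by intro v; simp) le_rfl
    · simp [star, edg]
    · simp [star, hx]
  · obtain ⟨x, y, hxy, rfl⟩ := Finset.card_eq_two.1 h3
    have hxa : x ≠ a := by rintro rfl; simp at haR
    have hya : y ≠ a := by rintro rfl; simp at haR
    have hx := hR x (by simp)
    have hy := hR y (by simp)
    refine (h.addPath [x, a, y] (by simp) (by simp [hxa, hya.symm, hxy]) (star a {x, y}) ?_ ?_).mono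
      (by intro v; simp) le_rfl
    · have : s(a, x) ∉ ({s(a, y)} : Finset (Sym2 V)) := by
        rw [Finset.mem_singleton, Sym2.congr_right]; exact hxy
      simp only [star, Finset.image_insert, Finset.image_singleton, edg]
      rw [Finset.insert_val_of_notMem this, Sym2.eq_swap (a := x)]; rfl
    · simp [star, hx, hy]

theorem pay (q : ℕ) : ∀ {F : Finset (Sym2 V)} {f : V → ℕ} {N : ℕ} {a : V} (R : Finset V),
    Dec F f N → a ∉ R → (∀ x ∈ R, s(a, x) ∉ F) → R.card ≤ 3 * q → q ≤ f a →
    Dec (F ∪ star a R) (fun v => if v = a then f v - q else f v) (N + q) := by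
  induction q with
  | zero =>
    intro F f N a R h _ _ hc _
    have : R = ∅ := by rw [← Finset.card_eq_zero]; omega
    subst this
    rw [star_empty, Finset.union_empty]
    exact h.mono (by intro v; beta_reduce; split_ifs <;> omega) (by omega)
  | succ q ih =>
    intro F f N a R h haR hR hc hq
    by_cases hs : R.card ≤ 2
    · exact (pay_small h haR hR hs).mono (by intro v; beta_reduce; split_ifs <;> omega) (by omega)
    obtain ⟨U, hU, hU3⟩ := Finset.exists_subset_card_eq (show 3 ≤ R.card by omega)
    obtain ⟨x, y, z, hxy, hxz, hyz, rfl⟩ := Finset.card_eq_three.1 hU3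
    have hne : ∀ v ∈ R, v ≠ a := by rintro v hv rfl; exact haR hv
    have hx := hU (show x ∈ _ by simp)
    have hy := hU (show y ∈ _ by simp)
    have hz := hU (show z ∈ _ by simp)
    obtain ⟨L, h1, h2, h3, h4⟩ := h
    have := h3 a
    obtain ⟨L', g1, g2, g3, g4⟩ := pay3 h1 (by omega) (hne x hx) (hne y hy) (hne z hz) hxy hxz hyz
    have hd : Dec (F ∪ star a {x, y, z}) (fun v => if v = a then f v - 1 else f v) (N + 1) := by
      refine ⟨L', g1, ?_, ?_, by omega⟩
      · rw [g3, h2]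
        have e : F ∪ star a {x, y, z} = insert s(a, x) (insert s(a, y) (insert s(a, z) F)) := by
          ext e; simp [star, or_comm, or_assoc, or_left_comm]
        rw [e, Finset.insert_val_of_notMem, Finset.insert_val_of_notMem,
          Finset.insert_val_of_notMem (hR z hz)]
        · simp only [Finset.mem_insert, Sym2.congr_right, not_or]; exact ⟨hyz, hR y hy⟩
        · simp only [Finset.mem_insert, Sym2.congr_right, not_or]; exact ⟨hxy, hxz, hR x hx⟩
      · intro v
        have := g4 v
        have := h3 v
        dsimp only
        split_ifs at * <;> omega
    have hd2 := ih (a := a) (R \ {x, y, z}) hd (fun hh => haR (Finset.mem_sdiff.1 hh).1) (by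
      intro v hv
      have hv' := Finset.mem_sdiff.1 hv
      rw [Finset.mem_union, not_or, mk_mem_star]
      exact ⟨hR v hv'.1, hv'.2⟩) (by
        rw [Finset.card_sdiff_of_subset hU, hU3]; omega) (by simp; omega)
    have e : F ∪ star a {x, y, z} ∪ star a (R \ {x, y, z}) = F ∪ star a R := by
      rw [Finset.union_assoc, ← star_union, Finset.union_sdiff_of_subset hU]
    rw [e] at hd2
    refine hd2.mono ?_ (by omega)
    intro v; beta_reduce; split_ifs <;> omega

end PD

namespace PD
variable {V : Type*} [DecidableEq V]

theorem edg_parity (v : V) : ∀ m : List V, m ≠ [] → m.Nodup →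
    Even ((edg m).countP (v ∈ ·) + ec m v)
  | [], h, _ => absurd rfl h
  | [x], _, _ => by
    by_cases h : x = v <;> simp [edg, ec, h]
  | x :: y :: l, _, hn => by
    have hn1 := List.nodup_cons.1 hn
    have ih := edg_parity v (y :: l) (by simp) hn1.2
    have hxy : x ≠ y := fun h => hn1.1 (by simp [h])
    have e : ec (x :: y :: l) v + (if y = v then 1 else 0) =
        ec (y :: l) v + (if x = v then 1 else 0) := by
      simp only [ec, List.head?_cons, List.getLast?_cons_cons, Option.some.injEq]
      omega
    have e2 : (edg (x :: y :: l)).countP (v ∈ ·) =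
        (edg (y :: l)).countP (v ∈ ·) + ((if x = v then 1 else 0) + (if y = v then 1 else 0)) := by
      simp only [edg, Multiset.countP_cons]
      congr 1
      by_cases h1 : x = v
      · have h2 : y ≠ v := fun h => hxy (h1.trans h.symm)
        simp [h1, h2]
      · by_cases h2 : y = v
        · simp [h1, h2]
        · have h3 : v ∉ s(x, y) := by
            rw [Sym2.mem_iff]; rintro (h | h)
            · exact h1 h.symm
            · exact h2 h.symm
          simp [h1, h2, h3]
    rw [e2]
    obtain ⟨k, hk⟩ := ih
    split_ifs at * with h1 h2
    · exact absurd (h1.trans h2.symm) hxy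
    · exact ⟨k + 1, by omega⟩
    · exact ⟨k, by omega⟩
    · exact ⟨k, by omega⟩

variable [Fintype V]

/-- no loops -/
def ND (F : Finset (Sym2 V)) : Prop := ∀ v, s(v, v) ∉ F

/-- degree of `v` in the edge set -/
def dg (F : Finset (Sym2 V)) (v : V) : ℕ := (Finset.univ.filter fun x => s(v, x) ∈ F).card

theorem dg_eq_countP (F : Finset (Sym2 V)) (v : V) : dg F v = F.val.countP (v ∈ ·) := by
  rw [Multiset.countP_eq_card_filter]
  have h : F.filter (v ∈ ·) = (Finset.univ.filter fun x => s(v, x) ∈ F).image (fun x => s(v, x)) := by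
    ext e
    simp only [Finset.mem_filter, Finset.mem_image, Finset.mem_univ, true_and]
    constructor
    · rintro ⟨h1, h2⟩
      obtain ⟨x, rfl⟩ := Sym2.mem_iff_exists.1 h2
      exact ⟨x, h1, rfl⟩
    · rintro ⟨x, h, rfl⟩
      exact ⟨h, by simp⟩
  have h2 : (F.filter (v ∈ ·)).card = dg F v := by
    rw [h, Finset.card_image_of_injective]
    · rfl
    · intro x y hxy; exact Sym2.congr_right.1 hxy
  rw [← h2]; rfl

theorem parity {L : Multiset (List V)} {F : Finset (Sym2 V)} (hL : Good L) (hE : EL L = F.val)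
    (v : V) : Even (dg F v + DL L v) := by
  rw [dg_eq_countP, ← hE]
  clear hE
  induction L using Multiset.induction_on with
  | empty => simp [EL, DL]
  | cons m L ih =>
    have hg := hL.of_cons
    have h1 := ih hg.2.2
    have h2 := edg_parity v m hg.1 hg.2.1
    rw [EL_cons, DL_cons, Multiset.countP_add]
    rw [add_add_add_comm]
    exact h2.add h1

theorem dg_mono {F F' : Finset (Sym2 V)} (h : F ⊆ F') (v : V) : dg F v ≤ dg F' v := by
  apply Finset.card_le_card
  intro x; simp only [Finset.mem_filter, Finset.mem_univ, true_and]; exact fun hx => h hx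

theorem dg_union {F F' : Finset (Sym2 V)} (h : Disjoint F F') (v : V) :
    dg (F ∪ F') v = dg F v + dg F' v := by
  rw [dg, dg, dg, ← Finset.card_union_of_disjoint]
  · congr 1; ext x; simp
  · rw [Finset.disjoint_left] at h ⊢
    intro x; simp only [Finset.mem_filter, Finset.mem_univ, true_and]; exact fun hx => h hx

theorem dg_sdiff {F τ : Finset (Sym2 V)} (h : τ ⊆ F) (v : V) :
    dg F v = dg (F \ τ) v + dg τ v := by
  rw [← dg_union Finset.sdiff_disjoint, Finset.sdiff_union_of_subset h]

theorem dg_star {a : V} {T : Finset V} (ha : a ∉ T) (v : V) :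
    dg (star a T) v = if v = a then T.card else if v ∈ T then 1 else 0 := by
  rw [dg]
  simp only [mk_mem_star']
  by_cases h : v = a
  · rw [if_pos h]
    congr 1; ext x
    simp only [Finset.mem_filter, Finset.mem_univ, true_and, h]
    constructor
    · rintro (h1 | ⟨_, h1⟩)
      · exact h1
      · exact absurd h1 ha
    · exact fun h1 => Or.inl h1
  · rw [if_neg h]
    by_cases hv : v ∈ T
    · simp only [h, hv, false_and, false_or, and_true, if_true]
      rw [Finset.card_eq_one]; exact ⟨a, by ext; simp⟩
    · simp [h, hv]

theorem dg_pos {F : Finset (Sym2 V)} {v x : V} (h : s(v, x) ∈ F) : 0 < dg F v := by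
  rw [dg, Finset.card_pos]; exact ⟨x, by simpa using h⟩

theorem dg_pos_right {F : Finset (Sym2 V)} {v x : V} (h : s(v, x) ∈ F) : 0 < dg F x := by
  rw [Sym2.eq_swap] at h; exact dg_pos h

theorem exists_of_dg_pos {F : Finset (Sym2 V)} {v : V} (h : 0 < dg F v) : ∃ x, s(v, x) ∈ F := by
  rw [dg, Finset.card_pos] at h
  obtain ⟨x, hx⟩ := h
  exact ⟨x, by simpa using hx⟩

theorem handshake (F : Finset (Sym2 V)) (hF : ND F) : Even (∑ v, dg F v) := by
  induction F using Finset.induction_on with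
  | empty => simp [dg]
  | insert e F he ih =>
    induction e with
    | _ a b =>
      have hab : a ≠ b := by rintro rfl; exact hF a (by simp)
      have e1 : insert s(a, b) F = star a {b} ∪ F := by ext; simp [star]
      have hd : Disjoint (star a {b}) F := by simp [star, he]
      have ih' := ih (fun v hv => hF v (by simp [hv]))
      rw [e1]
      simp only [dg_union hd, Finset.sum_add_distrib]
      refine Even.add ?_ ih'
      have : ∀ v, dg (star a {b}) v = (if v = a then 1 else 0) + (if v = b then 1 else 0) := by
        intro v
        rw [dg_star (by simpa using hab)]
        by_cases h1 : v = a
        · have : v ≠ b := by rw [h1]; exact hab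
          simp [h1, hab]
        · simp [h1]
      simp only [this, Finset.sum_add_distrib]
      simp

/-- weights -/
def wt (F : Finset (Sym2 V)) (π : V → ℕ) (v : V) : ℕ :=
  3 * π v + (if Odd (dg F v + π v) then 3 else if dg F v = 0 then 0 else 4)

def Phi (F : Finset (Sym2 V)) (π : V → ℕ) : ℕ := ∑ v, wt F π v

def Goal (F : Finset (Sym2 V)) (π : V → ℕ) : Prop := ∃ N, 6 * N ≤ Phi F π ∧ Dec F π N

def Hyp (F : Finset (Sym2 V)) : Prop :=
  ∀ F' : Finset (Sym2 V), F'.card < F.card → ND F' → ∀ π, Goal F' π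

theorem useIH {F τ : Finset (Sym2 V)} (hH : Hyp F) (hF : ND F) (hτ : τ ⊆ F) (hne : τ.Nonempty)
    (π : V → ℕ) : ∃ N, 6 * N ≤ Phi (F \ τ) π ∧
      Dec (F \ τ) (fun v => if Odd (dg (F \ τ) v + π v) then π v + 1 else π v) N := by
  have hc : (F \ τ).card < F.card := by
    rw [Finset.card_sdiff_of_subset hτ]
    have := Finset.card_le_card hτ
    have := Finset.card_pos.2 hne
    omega
  obtain ⟨N, hN, L, h1, h2, h3, h4⟩ := hH (F \ τ) hc
    (fun v hv => hF v (Finset.mem_sdiff.1 hv).1) π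
  refine ⟨N, hN, L, h1, h2, ?_, h4⟩
  intro v
  have hp := parity h1 h2 v
  have := h3 v
  beta_reduce
  split_ifs with ho
  · rcases Nat.lt_or_ge (π v) (DL L v) with h | h
    · exact h
    · have : DL L v = π v := by omega
      rw [this] at hp
      exact absurd hp (by rw [Nat.not_even_iff_odd]; exact ho)
  · exact this

theorem goal_empty (π : V → ℕ) : Goal (∅ : Finset (Sym2 V)) π := by
  have h0 : ∀ v : V, dg (∅ : Finset (Sym2 V)) v = 0 := by intro v; simp [dg]
  have key : ∀ A : Finset V, ∃ L : Multiset (List V), Good L ∧ EL L = 0 ∧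
      (∀ v ∈ A, π v ≤ DL L v) ∧ 6 * Multiset.card L ≤ ∑ v ∈ A, wt ∅ π v := by
    intro A
    induction A using Finset.induction_on with
    | empty => exact ⟨0, by simp [Good], by simp [EL], by simp, by simp⟩
    | insert a A ha ih =>
      obtain ⟨L, h1, h2, h3, h4⟩ := ih
      refine ⟨Multiset.replicate ((π a + 1) / 2) [a] + L, ?_, ?_, ?_, ?_⟩
      · intro m hm
        rcases Multiset.mem_add.1 hm with h | h
        · rw [Multiset.eq_of_mem_replicate h]; simp
        · exact h1 m h
      · rw [EL, Multiset.map_add, Multiset.sum_add]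
        rw [EL] at h2
        rw [h2]; simp [edg]
      · intro v hv
        rw [DL, Multiset.map_add, Multiset.sum_add]
        rcases Finset.mem_insert.1 hv with rfl | hv
        · simp [ec]; omega
        · have := h3 v hv
          rw [DL] at this; omega
      · rw [Finset.sum_insert ha, Multiset.card_add, Multiset.card_replicate]
        have : 6 * ((π a + 1) / 2) ≤ wt ∅ π a := by
          simp only [wt, h0, zero_add, if_true]
          split_ifs with h
          · omega
          · rw [Nat.not_odd_iff_even] at h
            obtain ⟨k, hk⟩ := h; omega
        omega
  obtain ⟨L, h1, h2, h3, h4⟩ := key Finset.univ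
  exact ⟨Multiset.card L, h4, L, h1, by rw [h2]; rfl, fun v => h3 v (Finset.mem_univ v), le_rfl⟩

/-- dangerous vertices -/
def EE (F : Finset (Sym2 V)) (π : V → ℕ) : Finset V :=
  Finset.univ.filter fun v => π v = 0 ∧ Even (dg F v) ∧ 0 < dg F v

/-- dangerous neighbours -/
def NN (F : Finset (Sym2 V)) (π : V → ℕ) (v : V) : Finset V :=
  (EE F π).filter fun x => s(v, x) ∈ F

theorem mem_EE {F : Finset (Sym2 V)} {π : V → ℕ} {v : V} :
    v ∈ EE F π ↔ π v = 0 ∧ Even (dg F v) ∧ 0 < dg F v := by simp [EE]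

theorem mem_NN {F : Finset (Sym2 V)} {π : V → ℕ} {v x : V} :
    x ∈ NN F π v ↔ x ∈ EE F π ∧ s(v, x) ∈ F := by simp [NN]

/-- invariant of the end function -/
def Inv (F : Finset (Sym2 V)) (π f : V → ℕ) : Prop :=
  (∀ v, π v ≤ f v) ∧ ∀ v, v ∉ EE F π → 0 < dg F v → 1 ≤ f v

end PD

namespace PD
variable {V : Type*} [DecidableEq V] [Fintype V]

theorem NN_symm {F : Finset (Sym2 V)} {π : V → ℕ} {v x : V} (hv : v ∈ EE F π)
    (h : x ∈ NN F π v) : v ∈ NN F π x := by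
  rw [mem_NN] at *
  exact ⟨hv, by rw [Sym2.eq_swap]; exact h.2⟩

theorem start {F τ : Finset (Sym2 V)} {π : V → ℕ} (hH : Hyp F) (hF : ND F) (hτ : τ ⊆ F)
    (hne : τ.Nonempty) (P W : Finset V) (hP : P ⊆ EE F π) (hW : W ⊆ EE F π)
    (hPW : ∀ v ∈ W, v ∉ P)
    (hPτ : ∀ v ∈ P, dg τ v = 0) (hWτ : ∀ v ∈ W, Odd (dg τ v))
    (hoff : ∀ v, v ∉ EE F π → dg τ v = 0) :
    ∃ N f, 6 * N + W.card ≤ Phi F π + 2 * P.card ∧ Dec (F \ τ) f N ∧ Inv F π f ∧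
      (∀ v ∈ W, 1 ≤ f v) ∧ (∀ v ∈ P, 1 ≤ f v) := by
  obtain ⟨N, hN, hD⟩ := useIH hH hF hτ hne (fun v => π v + if v ∈ P then 1 else 0)
  refine ⟨N, _, ?_, hD, ?_, ?_, ?_⟩
  · have hpt : ∀ v, wt (F \ τ) (fun v => π v + if v ∈ P then 1 else 0) v +
        (if v ∈ W then 1 else 0) ≤ wt F π v + 2 * (if v ∈ P then 1 else 0) := by
      intro v
      have hd := dg_sdiff hτ v
      simp only [wt]
      by_cases hv : v ∈ EE F π
      · have hv' := mem_EE.1 hv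
        simp only [hv'.1]
        have ho : ¬ Odd (dg F v + 0) := by
          rw [add_zero, Nat.not_odd_iff_even]; exact hv'.2.1
        rw [if_neg ho, if_neg (show ¬ dg F v = 0 by omega)]
        by_cases hvP : v ∈ P
        · have := hPτ v hvP
          have hvW : v ∉ W := fun h => hPW v h hvP
          have e : dg (F \ τ) v = dg F v := by omega
          have ho2 : Odd (dg (F \ τ) v + (0 + 1)) := by
            rw [e]; exact hv'.2.1.add_one
          simp only [if_pos hvP, if_neg hvW, if_pos ho2]
          omega
        · by_cases hvW : v ∈ W
          · have := hWτ v hvW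
            have ho2 : Odd (dg (F \ τ) v + (0 + 0)) := by
              rw [add_zero]
              have hh := hv'.2.1
              rw [hd] at hh
              by_contra hcon
              rw [Nat.not_odd_iff_even] at hcon
              have := hcon.add_odd this
              exact (Nat.not_even_iff_odd.2 this) hh
            simp only [if_neg hvP, if_pos hvW, if_pos ho2]
            omega
          · simp only [if_neg hvP, if_neg hvW]
            split_ifs <;> omega
      · have := hoff v hv
        have hvP : v ∉ P := fun h => hv (hP h)
        have hvW : v ∉ W := fun h => hv (hW h)
        have e : dg (F \ τ) v = dg F v := by omega
        simp only [if_neg hvP, if_neg hvW, e]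
        simp
    have hs := Finset.sum_le_sum (s := Finset.univ) fun v _ => hpt v
    rw [Finset.sum_add_distrib, Finset.sum_add_distrib, ← Finset.mul_sum] at hs
    simp only [Finset.sum_boole, Finset.filter_univ_mem, Nat.cast_id] at hs
    rw [Phi] at *
    omega
  · refine ⟨fun v => ?_, fun v hv hd => ?_⟩
    · beta_reduce; split_ifs <;> omega
    · beta_reduce
      have h0 := hoff v hv
      have e : dg (F \ τ) v = dg F v := by have := dg_sdiff hτ v; omega
      have hvP : v ∉ P := fun h => hv (hP h)
      simp only [if_neg hvP, e, add_zero]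
      by_cases hπ : π v = 0
      · rw [hπ, add_zero]
        rw [if_pos]
        · by_contra hcon
          rw [Nat.not_odd_iff_even] at hcon
          exact hv (mem_EE.2 ⟨hπ, hcon, hd⟩)
      · split_ifs <;> omega
  · intro v hv
    beta_reduce
    have hv' := mem_EE.1 (hW hv)
    have hvP := hPW v hv
    have h0 := hWτ v hv
    have hd := dg_sdiff hτ v
    have : Odd (dg (F \ τ) v) := by
      have hh := hv'.2.1
      rw [hd] at hh
      by_contra hcon
      rw [Nat.not_odd_iff_even] at hcon
      have := hcon.add_odd h0
      exact (Nat.not_even_iff_odd.2 this) hh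
    simp only [if_neg hvP, hv'.1, add_zero, if_pos this]; omega
  · intro v hv
    beta_reduce
    simp only [if_pos hv]
    split_ifs <;> omega

theorem star_step {F G : Finset (Sym2 V)} {π f : V → ℕ} {N : ℕ} {c : V} {T : Finset V}
    (h : Dec G f N) (hGF : G ⊆ F) (hI : Inv F π f) (hT : T ⊆ NN F π c) (hc : c ∉ T)
    (hTG : ∀ x ∈ T, s(c, x) ∉ G) (hf : ∀ x ∈ T, 1 ≤ f x) (Z : Finset V)
    (hZ : ∀ v ∈ NN F π c, v ∉ Z → s(c, v) ∈ G → 1 ≤ f v) :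
    ∃ S ⊆ T, ∃ f', 2 * (T \ S).card ≤ T.card + Z.card ∧ Dec (G ∪ star c S) f' N ∧ Inv F π f' ∧
      (∀ v, v ∉ S → f v ≤ f' v) ∧ f c + S.card ≤ f' c ∧ (G ∪ star c S) ⊆ F := by
  obtain ⟨S, hS, h1, h2⟩ := star_absorb T.card Z.card rfl h hc hTG hf (by
    apply Finset.card_le_card
    intro v; simp only [Finset.mem_filter, Finset.mem_univ, true_and]
    rintro ⟨h1, h2⟩
    by_contra hv
    by_cases hvE : v ∈ EE F π
    · have := hZ v (mem_NN.2 ⟨hvE, hGF h1⟩) hv h1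
      omega
    · have := hI.2 v hvE (dg_pos_right (hGF h1))
      omega)
  have hcS : c ∉ S := fun hh => hc (hS hh)
  refine ⟨S, hS, _, h1, h2, ⟨fun v => ?_, fun v hv hd => ?_⟩, fun v hv => ?_, ?_, ?_⟩
  · have := hI.1 v
    by_cases hvS : v ∈ S
    · have := (mem_EE.1 (mem_NN.1 (hT (hS hvS))).1).1
      omega
    · beta_reduce
      rw [if_neg hvS]; split_ifs <;> omega
  · have := hI.2 v hv hd
    have hvS : v ∉ S := fun hh => hv (mem_NN.1 (hT (hS hh))).1
    beta_reduce
    rw [if_neg hvS]; split_ifs <;> omega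
  · beta_reduce
    rw [if_neg hv]; split_ifs <;> omega
  · beta_reduce
    rw [if_neg hcS, if_pos rfl]
  · refine Finset.union_subset hGF ?_
    intro e he
    obtain ⟨x, hx, rfl⟩ := mem_star.1 he
    exact (mem_NN.1 (hT (hS hx))).2

theorem pay_step {G : Finset (Sym2 V)} {π f : V → ℕ} {N : ℕ} {c : V} {R : Finset V} (q : ℕ)
    (h : Dec G f N) (hπ : ∀ v, π v ≤ f v) (hc0 : π c = 0) (hc : c ∉ R)
    (hR : ∀ x ∈ R, s(c, x) ∉ G) (hq : R.card ≤ 3 * q) (hf : q ≤ f c) :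
    ∃ f', Dec (G ∪ star c R) f' (N + q) ∧ (∀ v, π v ≤ f' v) ∧ ∀ v, v ≠ c → f' v = f v := by
  refine ⟨_, pay q R h hc hR hq hf, fun v => ?_, fun v hv => ?_⟩
  · have := hπ v
    beta_reduce; split_ifs with h1
    · rw [h1, hc0]; exact Nat.zero_le _
    · exact this
  · beta_reduce; rw [if_neg hv]

/-- dangerous vertices form a nonempty independent set -/
theorem case_indep {F : Finset (Sym2 V)} {π : V → ℕ} (hH : Hyp F) (hF : ND F) {a : V}
    (ha : a ∈ EE F π) (hind : ∀ v ∈ EE F π, NN F π v = ∅) : Goal F π := by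
  have ha' := mem_EE.1 ha
  obtain ⟨x, hx⟩ := exists_of_dg_pos ha'.2.2
  have hxE : x ∉ EE F π := by
    intro h
    have : x ∈ NN F π a := mem_NN.2 ⟨h, hx⟩
    rw [hind a ha] at this; simp at this
  have haA : a ∈ NN F π x := mem_NN.2 ⟨ha, by rw [Sym2.eq_swap]; exact hx⟩
  have hA : ∀ v ∈ NN F π x, v ∈ EE F π := fun v hv => (mem_NN.1 hv).1
  set A := NN F π x with hAdef
  have hxA : x ∉ A := fun h => hxE (hA x h)
  have hτ : star x A ⊆ F := by
    intro e he
    obtain ⟨y, hy, rfl⟩ := mem_star.1 he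
    exact (mem_NN.1 hy).2
  have hne : (star x A).Nonempty := ⟨s(x, a), mk_mem_star.2 haA⟩
  have hdx : 0 < dg F x := dg_pos_right hx
  obtain ⟨N, hN, hD⟩ := useIH hH hF hτ hne π
  set f : V → ℕ := fun v => if Odd (dg (F \ star x A) v + π v) then π v + 1 else π v with hf
  have hπf : ∀ v, π v ≤ f v := by intro v; simp only [hf]; split_ifs <;> omega
  have hst : ∀ v, dg F v = dg (F \ star x A) v +
      (if v = x then A.card else if v ∈ A then 1 else 0) := by
    intro v; rw [← dg_star hxA]; exact dg_sdiff hτ v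
  have hAodd : ∀ v ∈ A, Odd (dg (F \ star x A) v + π v) := by
    intro v hv
    have h1 := mem_EE.1 (hA v hv)
    have hvx : v ≠ x := fun h => hxA (h ▸ hv)
    have h2 := hst v
    rw [if_neg hvx, if_pos hv] at h2
    have h3 := h1.2.1
    rw [h2] at h3
    rw [h1.1, add_zero]
    by_contra hcon
    rw [Nat.not_odd_iff_even] at hcon
    exact (Nat.not_even_iff_odd.2 hcon.add_one) h3
  have hfA : ∀ v ∈ A, 1 ≤ f v := by
    intro v hv
    simp only [hf, if_pos (hAodd v hv)]; omega
  have hfE : ∀ v, v ∉ EE F π → v ≠ x → 0 < dg F v → 1 ≤ f v := by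
    intro v hv hvx hd
    have hvA : v ∉ A := fun h => hv (hA v h)
    have h2 := hst v
    rw [if_neg hvx, if_neg hvA, add_zero] at h2
    by_cases hπ : π v = 0
    · have : Odd (dg (F \ star x A) v + π v) := by
        rw [hπ, add_zero, ← h2]
        by_contra hcon
        rw [Nat.not_odd_iff_even] at hcon
        exact hv (mem_EE.2 ⟨hπ, hcon, hd⟩)
      simp only [hf, if_pos this]; omega
    · have := hπf v; omega
  have hPhi : Phi (F \ star x A) π ≤ Phi F π := by
    have hpt : ∀ v, wt (F \ star x A) π v + (if v ∈ A then 1 else 0) ≤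
        wt F π v + (if v = x then 1 else 0) := by
      intro v
      have h2 := hst v
      simp only [wt]
      by_cases hvx : v = x
      · have hvA : v ∉ A := hvx ▸ hxA
        have : dg F v ≠ 0 := by rw [hvx]; omega
        rw [if_neg hvA, if_pos hvx, if_neg this]
        split_ifs <;> omega
      · rw [if_neg hvx] at h2
        by_cases hvA : v ∈ A
        · have h1 := mem_EE.1 (hA v hvA)
          have ho : ¬ Odd (dg F v + π v) := by
            rw [h1.1, add_zero, Nat.not_odd_iff_even]; exact h1.2.1
          rw [if_pos hvA, if_neg hvx, if_neg ho, if_pos (hAodd v hvA), if_neg (by omega)]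
        · rw [if_neg hvA, add_zero] at h2
          rw [if_neg hvA, if_neg hvx, h2]
    have hs := Finset.sum_le_sum (s := Finset.univ) fun v _ => hpt v
    rw [Finset.sum_add_distrib, Finset.sum_add_distrib] at hs
    simp only [Finset.sum_boole, Finset.filter_univ_mem, Nat.cast_id, Finset.filter_eq',
      Finset.mem_univ, if_true, Finset.card_singleton] at hs
    have := Finset.card_pos.2 ⟨a, haA⟩
    rw [Phi, Phi]; omega
  -- absorb at x
  obtain ⟨S, hS, hc, hD2⟩ := star_absorb A.card 0 rfl hD hxA
    (fun y hy h => (Finset.mem_sdiff.1 h).2 (mk_mem_star.2 hy)) hfA (by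
      rw [Nat.le_zero, Finset.card_eq_zero, Finset.filter_eq_empty_iff]
      rintro v - ⟨h1, h2⟩
      have h1' := Finset.mem_sdiff.1 h1
      by_cases hvE : v ∈ EE F π
      · exact h1'.2 (mk_mem_star.2 (mem_NN.2 ⟨hvE, h1'.1⟩))
      · have hvx : v ≠ x := by rintro rfl; exact hF _ h1'.1
        have := hfE v hvE hvx (dg_pos_right h1'.1)
        omega)
  -- then one by one
  have loop : ∀ R : Finset V, R ⊆ A \ S → ∀ G g, G = F \ star x R → Dec G g N →
      (∀ v, π v ≤ g v) → π x + R.card ≤ g x →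
      (∀ v, v ∉ EE F π → v ≠ x → 0 < dg F v → 1 ≤ g v) → Dec F π N := by
    intro R
    induction R using Finset.induction_on with
    | empty =>
      intro _ G g hG hD h1 _ _
      rw [hG, star_empty, Finset.sdiff_empty] at hD
      exact hD.mono h1 le_rfl
    | insert r R hr ih =>
      intro hR G g hG hD h1 h2 h3
      have hrA : r ∈ A := (Finset.mem_sdiff.1 (hR (by simp))).1
      have hrE := hA r hrA
      have hrx : r ≠ x := fun h => hxA (h ▸ hrA)
      have hrF : s(r, x) ∈ F := by rw [Sym2.eq_swap]; exact (mem_NN.1 hrA).2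
      rw [Finset.card_insert_of_notMem hr] at h2
      obtain ⟨y, hy, hD'⟩ := absorb_one (a := r) (T := {x}) hD (by simpa using hrx) (by
        intro y hy
        rw [Finset.mem_singleton] at hy; subst hy
        rw [hG, Finset.mem_sdiff, not_and_not_right, Sym2.eq_swap]
        intro _
        exact mk_mem_star.2 (by simp)) (by
          rw [Finset.sum_singleton]
          refine lt_of_eq_of_lt ?_ (show 0 < g x by omega)
          rw [Finset.card_eq_zero, Finset.filter_eq_empty_iff]
          rintro v - ⟨k1, k2⟩
          rw [hG] at k1
          have k1' := Finset.mem_sdiff.1 k1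
          have hvE : v ∉ EE F π := by
            intro h
            have : v ∈ NN F π r := mem_NN.2 ⟨h, k1'.1⟩
            rw [hind r hrE] at this; simp at this
          have hvx : v ≠ x := by
            rintro rfl; exact k1'.2 (by rw [Sym2.eq_swap]; exact mk_mem_star.2 (by simp))
          have := h3 v hvE hvx (dg_pos_right k1'.1)
          omega)
      rw [Finset.mem_singleton] at hy; subst hy
      refine ih (fun v hv => hR (by simp [hv])) _ _ ?_ hD' ?_ ?_ ?_
      · rw [hG, star_insert]
        ext e
        simp only [Finset.mem_insert, Finset.mem_sdiff, not_or]
        constructor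
        · rintro (h | h)
          · subst h
            refine ⟨hrF, fun hh => ?_⟩
            rw [Sym2.eq_swap, mk_mem_star] at hh
            exact hr hh
          · exact ⟨h.1, h.2.2⟩
        · rintro ⟨h5, h6⟩
          by_cases he : e = s(y, r)
          · left; rw [he, Sym2.eq_swap]
          · right; exact ⟨h5, he, h6⟩
      · intro v
        have := h1 v
        beta_reduce
        split_ifs with k1 k2
        · subst k1; omega
        · omega
        · omega
      · beta_reduce
        rw [if_pos rfl]; omega
      · intro v k1 k2 k3
        have := h3 v k1 k2 k3
        beta_reduce
        rw [if_neg k2]; split_ifs <;> omega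
  have hcS := Finset.card_sdiff_add_card_eq_card hS
  have hxS : x ∉ S := fun h => hxA (hS h)
  refine ⟨N, by omega, loop (A \ S) (Finset.Subset.refl _) _ _ ?_ hD2 ?_ ?_ ?_⟩
  · have e : star x A = star x S ∪ star x (A \ S) := by
      rw [← star_union, Finset.union_sdiff_of_subset hS]
    have hd : Disjoint (star x S) (star x (A \ S)) := by
      rw [Finset.disjoint_left]
      intro e he1 he2
      obtain ⟨y, hy, rfl⟩ := mem_star.1 he1
      rw [mk_mem_star] at he2
      exact (Finset.mem_sdiff.1 he2).2 hy
    rw [Finset.disjoint_left] at hd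
    ext e'
    have h1 : e' ∈ star x S → e' ∈ F := fun h => hτ (by rw [e]; exact Finset.mem_union_left _ h)
    have h2 := @hd e'
    rw [e]
    simp only [Finset.mem_union, Finset.mem_sdiff]
    tauto
  · intro v
    have := hπf v
    beta_reduce
    split_ifs with k1 k2
    · rw [(mem_EE.1 (hA v (hS k1))).1]
    · omega
    · omega
  · beta_reduce
    rw [if_neg hxS, if_pos rfl]
    have := hπf x; omega
  · intro v k1 k2 k3
    have hvS : v ∉ S := fun h => k1 (hA v (hS h))
    beta_reduce
    rw [if_neg hvS, if_neg k2]; exact hfE v k1 k2 k3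

end PD

namespace PD
variable {V : Type*} [DecidableEq V] [Fintype V]

theorem back {F : Finset (Sym2 V)} {π f : V → ℕ} {N : ℕ} {a x : V} (hF : ND F)
    (hax : s(x, a) ∈ F) (hD : Dec (F \ star x {a}) f N) (hπ : ∀ v, π v ≤ f v)
    (ha : π a + 1 ≤ f a) (hz : ∀ v, v ≠ a → v ≠ x → s(x, v) ∈ F → 1 ≤ f v) : Dec F π N := by
  have hne : x ≠ a := by rintro rfl; exact hF _ hax
  obtain ⟨y, hy, hD'⟩ := absorb_one (a := x) (T := {a}) hD (by simpa using hne) (by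
      intro y hy hh
      exact (Finset.mem_sdiff.1 hh).2 (mk_mem_star.2 hy)) (by
        rw [Finset.sum_singleton]
        refine lt_of_eq_of_lt ?_ (show 0 < f a by omega)
        rw [Finset.card_eq_zero, Finset.filter_eq_empty_iff]
        rintro v - ⟨k1, k2⟩
        have k1' := Finset.mem_sdiff.1 k1
        have h1 : v ≠ a := by rintro rfl; exact k1'.2 (mk_mem_star.2 (by simp))
        have h2 : v ≠ x := by rintro rfl; exact hF _ k1'.1
        have := hz v h1 h2 k1'.1
        omega)
  rw [Finset.mem_singleton] at hy; subst hy
  have e : insert s(x, y) (F \ star x {y}) = F := by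
    ext e
    have : e = s(x, y) → e ∈ F := by rintro rfl; exact hax
    simp only [Finset.mem_insert, Finset.mem_sdiff, star, Finset.image_singleton,
      Finset.mem_singleton]
    tauto
  rw [e] at hD'
  refine hD'.mono ?_ le_rfl
  intro v
  have := hπ v
  beta_reduce
  split_ifs with k1 k2
  · subst k1; omega
  · omega
  · omega

theorem case_even {F : Finset (Sym2 V)} {π : V → ℕ} (hH : Hyp F) (hF : ND F) {a : V}
    (hE : EE F π = ∅) (ha : 0 < dg F a) (hev : Even (dg F a + π a)) : Goal F π := by
  obtain ⟨x, hx⟩ := exists_of_dg_pos ha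
  have hxa : s(x, a) ∈ F := by rw [Sym2.eq_swap]; exact hx
  have hne : x ≠ a := by rintro rfl; exact hF _ hxa
  have hτ : star x {a} ⊆ F := by
    intro e he; obtain ⟨y, hy, rfl⟩ := mem_star.1 he
    rw [Finset.mem_singleton] at hy; subst hy; exact hxa
  have hdx : 0 < dg F x := dg_pos hxa
  obtain ⟨N, hN, hD⟩ := useIH hH hF hτ ⟨s(x, a), mk_mem_star.2 (by simp)⟩ π
  have hst : ∀ v, dg F v = dg (F \ star x {a}) v +
      (if v = x then 1 else if v = a then 1 else 0) := by
    intro v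
    have := dg_star (a := x) (T := {a}) (by simpa using hne) v
    simp only [Finset.card_singleton, Finset.mem_singleton] at this
    rw [← this]; exact dg_sdiff hτ v
  have hao : Odd (dg (F \ star x {a}) a + π a) := by
    have h1 := hst a
    rw [if_neg hne.symm, if_pos rfl] at h1
    rw [h1] at hev
    by_contra hcon
    rw [Nat.not_odd_iff_even] at hcon
    have h2 := hcon.add_one
    rw [show dg (F \ star x {a}) a + π a + 1 = dg (F \ star x {a}) a + 1 + π a by omega] at h2
    exact (Nat.not_even_iff_odd.2 h2) hev
  refine ⟨N, ?_, back hF hxa hD ?_ ?_ ?_⟩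
  · refine hN.trans ?_
    have hpt : ∀ v, wt (F \ star x {a}) π v + (if v = a then 1 else 0) ≤
        wt F π v + (if v = x then 1 else 0) := by
      intro v
      have h2 := hst v
      simp only [wt]
      by_cases hvx : v = x
      · have hva : v ≠ a := hvx ▸ hne
        have : dg F v ≠ 0 := by rw [hvx]; omega
        rw [if_neg hva, if_pos hvx, if_neg this]
        split_ifs <;> omega
      · rw [if_neg hvx] at h2
        by_cases hva : v = a
        · subst hva
          rw [if_pos rfl, if_neg hvx, if_pos hao, if_neg (Nat.not_odd_iff_even.2 hev),
            if_neg (show ¬ dg F v = 0 by omega)]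
        · rw [if_neg hva, add_zero] at h2
          rw [if_neg hva, if_neg hvx, h2]
    have hs := Finset.sum_le_sum (s := Finset.univ) fun v _ => hpt v
    rw [Finset.sum_add_distrib, Finset.sum_add_distrib] at hs
    simp only [Finset.sum_boole, Nat.cast_id, Finset.filter_eq',
      Finset.mem_univ, if_true, Finset.card_singleton] at hs
    rw [Phi, Phi]; omega
  · intro v; beta_reduce; split_ifs <;> omega
  · beta_reduce; rw [if_pos hao]
  · intro v h1 h2 h3
    have h4 := hst v
    rw [if_neg h2, if_neg h1, add_zero] at h4
    beta_reduce
    by_cases hπ : π v = 0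
    · rw [if_pos]
      · omega
      · rw [hπ, add_zero, ← h4]
        by_contra hcon
        rw [Nat.not_odd_iff_even] at hcon
        have : v ∈ EE F π := mem_EE.2 ⟨hπ, hcon, dg_pos_right h3⟩
        rw [hE] at this; simp at this
    · split_ifs <;> omega

theorem case_odd {F : Finset (Sym2 V)} {π : V → ℕ} (hH : Hyp F) (hF : ND F) {a : V}
    (ha : 0 < dg F a) (hodd : ∀ v, 0 < dg F v → Odd (dg F v + π v)) : Goal F π := by
  obtain ⟨x, hx⟩ := exists_of_dg_pos ha
  have hxa : s(x, a) ∈ F := by rw [Sym2.eq_swap]; exact hx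
  have hne : x ≠ a := by rintro rfl; exact hF _ hxa
  have hτ : star x {a} ⊆ F := by
    intro e he; obtain ⟨y, hy, rfl⟩ := mem_star.1 he
    rw [Finset.mem_singleton] at hy; subst hy; exact hxa
  have hdx : 0 < dg F x := dg_pos hxa
  obtain ⟨N, hN, hD⟩ := useIH hH hF hτ ⟨s(x, a), mk_mem_star.2 (by simp)⟩
    (fun v => π v + if v = a then 1 else 0)
  have hst : ∀ v, dg F v = dg (F \ star x {a}) v +
      (if v = x then 1 else if v = a then 1 else 0) := by
    intro v
    have := dg_star (a := x) (T := {a}) (by simpa using hne) v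
    simp only [Finset.card_singleton, Finset.mem_singleton] at this
    rw [← this]; exact dg_sdiff hτ v
  have hao : Odd (dg (F \ star x {a}) a + (π a + 1)) := by
    have h1 := hst a
    rw [if_neg hne.symm, if_pos rfl] at h1
    have h2 := hodd a ha
    rw [h1] at h2
    rw [show dg (F \ star x {a}) a + (π a + 1) = dg (F \ star x {a}) a + 1 + π a by omega]
    exact h2
  have hmod : Phi F π % 6 = 0 := by
    have h1 : Phi F π = 3 * ∑ v, (π v + if Odd (dg F v + π v) then 1 else 0) := by
      rw [Phi, Finset.mul_sum]
      refine Finset.sum_congr rfl fun v _ => ?_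
      rw [wt]
      by_cases h : 0 < dg F v
      · rw [if_pos (hodd v h), if_pos (hodd v h)]; ring
      · rw [if_pos (show dg F v = 0 by omega)]; split_ifs <;> ring
    have h2 : Even (∑ v, (π v + if Odd (dg F v + π v) then 1 else 0)) := by
      have h3 := handshake F hF
      have h4 : Even (∑ v, (dg F v + (π v + if Odd (dg F v + π v) then 1 else 0))) := by
        refine Finset.even_sum _ fun v _ => ?_
        rw [← add_assoc]
        split_ifs with h
        · exact h.add_one
        · rw [add_zero]; exact Nat.not_odd_iff_even.1 h
      rw [Finset.sum_add_distrib] at h4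
      exact (Nat.even_add.1 h4).1 h3
    obtain ⟨k, hk⟩ := h2
    rw [h1, hk]; omega
  refine ⟨N, ?_, back hF hxa hD ?_ ?_ ?_⟩
  · suffices h : Phi (F \ star x {a}) (fun v => π v + if v = a then 1 else 0) ≤ Phi F π + 4 by
      omega
    have hpt : ∀ v, wt (F \ star x {a}) (fun v => π v + if v = a then 1 else 0) v ≤
        wt F π v + ((if v = x then 1 else 0) + 3 * (if v = a then 1 else 0)) := by
      intro v
      have h2 := hst v
      simp only [wt]
      by_cases hvx : v = x
      · have hva : v ≠ a := hvx ▸ hne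
        have : dg F v ≠ 0 := by rw [hvx]; omega
        simp only [if_neg hva, if_pos hvx, if_neg this]
        split_ifs <;> omega
      · rw [if_neg hvx] at h2
        by_cases hva : v = a
        · subst hva
          simp only [if_true, if_neg hvx]
          rw [if_pos hao, if_pos (hodd v ha)]; omega
        · rw [if_neg hva, add_zero] at h2
          simp only [if_neg hva, if_neg hvx, h2]; simp
    have hs := Finset.sum_le_sum (s := Finset.univ) fun v _ => hpt v
    rw [Finset.sum_add_distrib, Finset.sum_add_distrib, ← Finset.mul_sum] at hs
    simp only [Finset.sum_boole, Nat.cast_id, Finset.filter_eq',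
      Finset.mem_univ, if_true, Finset.card_singleton] at hs
    rw [Phi, Phi]; omega
  · intro v; beta_reduce; split_ifs <;> omega
  · beta_reduce; simp only [if_true]; rw [if_pos hao]; omega
  · intro v h1 h2 h3
    have h4 := hst v
    rw [if_neg h2, if_neg h1, add_zero] at h4
    beta_reduce
    simp only [if_neg h1, add_zero]
    rw [if_pos]
    · omega
    · rw [← h4]; exact hodd v (dg_pos_right h3)

end PD

namespace PD
variable {V : Type*} [DecidableEq V] [Fintype V]

/-- the singleton of `c` when `k` is odd -/
def od (k : ℕ) (c : V) : Finset V := if k % 2 = 1 then {c} else ∅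

theorem od_card (k : ℕ) (c : V) : (od k c).card = k % 2 := by
  rw [od]; split_ifs with h
  · rw [Finset.card_singleton, h]
  · rw [Finset.card_empty]; omega

theorem mem_od {k : ℕ} {c v : V} : v ∈ od k c ↔ v = c ∧ k % 2 = 1 := by
  rw [od]; split_ifs with h <;> simp [h]

theorem not_mem_NN {F : Finset (Sym2 V)} {π : V → ℕ} (hF : ND F) (a : V) : a ∉ NN F π a :=
  fun h => hF a (mem_NN.1 h).2

theorem star_sub {F : Finset (Sym2 V)} {π : V → ℕ} {a : V} {T : Finset V} (hT : T ⊆ NN F π a) :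
    star a T ⊆ F := by
  intro e he; obtain ⟨y, hy, rfl⟩ := mem_star.1 he
  exact (mem_NN.1 (hT hy)).2

theorem star_split {a : V} {S T : Finset V} (h : S ⊆ T) : star a T = star a S ∪ star a (T \ S) := by
  rw [← star_union, Finset.union_sdiff_of_subset h]

theorem single_absorb {F : Finset (Sym2 V)} {π : V → ℕ} (hH : Hyp F) (hF : ND F) {a : V}
    (ha : a ∈ EE F π) {T P : Finset V} (hT : T ⊆ NN F π a) (hP : P ⊆ EE F π) (haP : a ∉ P)
    (hdis : ∀ v ∈ T, v ∉ P) (hcov : ∀ v ∈ NN F π a, v ∈ T ∨ v ∈ P) (hne : T.Nonempty) :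
    ∃ N f, ∃ S ⊆ T, 6 * N + T.card + T.card % 2 ≤ Phi F π + 2 * P.card ∧
      2 * (T \ S).card ≤ T.card ∧ Dec (F \ star a T ∪ star a S) f N ∧ Inv F π f ∧
      (∀ v ∈ T \ S, 1 ≤ f v) ∧ (∀ v ∈ P, 1 ≤ f v) ∧ S.card + T.card % 2 ≤ f a := by
  have haT : a ∉ T := fun h => not_mem_NN hF a (hT h)
  have hTE : ∀ v ∈ T, v ∈ EE F π := fun v hv => (mem_NN.1 (hT hv)).1
  obtain ⟨N, f, hN, hD, hI, hfW, hfP⟩ := start (τ := star a T) hH hF (star_sub hT)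
    (by obtain ⟨x, hx⟩ := hne; exact ⟨_, mk_mem_star.2 hx⟩) P (T ∪ od T.card a) hP
    (by
      intro v hv
      rcases Finset.mem_union.1 hv with h | h
      · exact hTE v h
      · rw [(mem_od.1 h).1]; exact ha)
    (by
      intro v hv
      rcases Finset.mem_union.1 hv with h | h
      · exact hdis v h
      · rw [(mem_od.1 h).1]; exact haP)
    (by
      intro v hv
      rw [dg_star haT, if_neg (by rintro rfl; exact haP hv), if_neg (fun h => hdis v h hv)])
    (by
      intro v hv
      rw [dg_star haT]
      rcases Finset.mem_union.1 hv with h | h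
      · rw [if_neg (by rintro rfl; exact haT h), if_pos h]; exact odd_one
      · rw [if_pos (mem_od.1 h).1]; exact Nat.odd_iff.2 (mem_od.1 h).2)
    (by
      intro v hv
      rw [dg_star haT, if_neg (by rintro rfl; exact hv ha), if_neg (fun h => hv (hTE v h))])
  rw [Finset.card_union_of_disjoint (by
    rw [Finset.disjoint_left]; intro v h1 h2
    rw [(mem_od.1 h2).1] at h1; exact haT h1), od_card] at hN
  obtain ⟨S, hS, f', h1, h2, h3, h4, h5, h6⟩ := star_step hD Finset.sdiff_subset hI hT haT
    (fun x hx h => (Finset.mem_sdiff.1 h).2 (mk_mem_star.2 hx))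
    (fun x hx => hfW x (Finset.mem_union_left _ hx)) ∅ (by
      intro v hv _ h
      rcases hcov v hv with hh | hh
      · exact absurd (mk_mem_star.2 hh) (Finset.mem_sdiff.1 h).2
      · exact hfP v hh)
  refine ⟨N, f', S, hS, by omega, by simpa using h1, h2, h3, ?_, ?_, ?_⟩
  · intro v hv
    have hv' := Finset.mem_sdiff.1 hv
    exact (hfW v (Finset.mem_union_left _ hv'.1)).trans (h4 v hv'.2)
  · intro v hv
    exact (hfP v hv).trans (h4 v (fun h => hdis v (hS h) hv))
  · by_cases ho : T.card % 2 = 1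
    · have := hfW a (Finset.mem_union_right _ (mem_od.2 ⟨rfl, ho⟩))
      omega
    · omega

theorem single_star {F : Finset (Sym2 V)} {π : V → ℕ} (hH : Hyp F) (hF : ND F) {a : V}
    (ha : a ∈ EE F π) {T P : Finset V} (hT : T ⊆ NN F π a) (hP : P ⊆ EE F π) (haP : a ∉ P)
    (hdis : ∀ v ∈ T, v ∉ P) (hcov : ∀ v ∈ NN F π a, v ∈ T ∨ v ∈ P) (hne : T.Nonempty) (q : ℕ)
    (hq1 : T.card / 2 ≤ 3 * q)
    (hbud : 6 * q + 2 * P.card ≤ T.card + T.card % 2) : Goal F π := by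
  have haT : a ∉ T := fun h => not_mem_NN hF a (hT h)
  obtain ⟨N, f, S, hS, h1, h2, h3, h4, -, -, h7⟩ := single_absorb hH hF ha hT hP haP hdis hcov hne
  have hc := Finset.card_sdiff_add_card_eq_card hS
  obtain ⟨f', g1, g2, -⟩ := pay_step (c := a) (R := T \ S) q h3 h4.1 (mem_EE.1 ha).1
    (fun h => haT (Finset.mem_sdiff.1 h).1) (by
      intro x hx
      have hx' := Finset.mem_sdiff.1 hx
      rw [Finset.mem_union, not_or, mk_mem_star]
      exact ⟨fun h => (Finset.mem_sdiff.1 h).2 (mk_mem_star.2 hx'.1), hx'.2⟩)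
    (by omega) (by omega)
  rw [Finset.union_assoc, ← star_split hS, Finset.sdiff_union_of_subset (star_sub hT)] at g1
  exact ⟨N + q, by omega, g1.mono g2 le_rfl⟩

/-- star with `6 m + 3` tokens, where leftover tokens can be reabsorbed at a leaf -/
theorem dtrick {F : Finset (Sym2 V)} {π : V → ℕ} (hH : Hyp F) (hF : ND F) {a : V}
    (ha : a ∈ EE F π) {T P : Finset V} (hT : T ⊆ NN F π a) (hP : P ⊆ EE F π) (haP : a ∉ P)
    (hdis : ∀ v ∈ T, v ∉ P) (hcov : ∀ v ∈ NN F π a, v ∈ T ∨ v ∈ P) (m : ℕ)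
    (hm : T.card = 6 * m + 3) (hPc : P.card ≤ 2)
    (hsub : ∀ x ∈ T, ∀ v ∈ NN F π x, v = a ∨ v ∈ NN F π a) : Goal F π := by
  have haT : a ∉ T := fun h => not_mem_NN hF a (hT h)
  have hne : T.Nonempty := Finset.card_pos.1 (by omega)
  obtain ⟨N, f, S, hS, h1, h2, h3, h4, h5, h6, h7⟩ :=
    single_absorb hH hF ha hT hP haP hdis hcov hne
  have hc := Finset.card_sdiff_add_card_eq_card hS
  have htok : ∀ x ∈ T \ S, s(a, x) ∉ F \ star a T ∪ star a S := by
    intro x hx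
    have hx' := Finset.mem_sdiff.1 hx
    rw [Finset.mem_union, not_or, mk_mem_star]
    exact ⟨fun h => (Finset.mem_sdiff.1 h).2 (mk_mem_star.2 hx'.1), hx'.2⟩
  by_cases hle : (T \ S).card ≤ 3 * m
  · obtain ⟨f', g1, g2, -⟩ := pay_step (c := a) (R := T \ S) m h3 h4.1 (mem_EE.1 ha).1
      (fun h => haT (Finset.mem_sdiff.1 h).1) htok hle (by omega)
    rw [Finset.union_assoc, ← star_split hS, Finset.sdiff_union_of_subset (star_sub hT)] at g1
    exact ⟨N + m, by omega, g1.mono g2 le_rfl⟩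
  · obtain ⟨x, hx⟩ : (T \ S).Nonempty := Finset.card_pos.1 (by omega)
    have hx' := Finset.mem_sdiff.1 hx
    have hxa : x ≠ a := by rintro rfl; exact haT hx'.1
    have hxE := (mem_NN.1 (hT hx'.1)).1
    obtain ⟨y, hy, hD⟩ := absorb_one (a := x) (T := {a}) h3 (by simpa using hxa) (by
      intro y hy
      rw [Finset.mem_singleton] at hy; subst hy
      rw [Sym2.eq_swap]; exact htok x hx) (by
        rw [Finset.sum_singleton]
        refine lt_of_le_of_lt (Finset.card_le_card (t := S) ?_) (show S.card < f a by omega)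
        intro v; simp only [Finset.mem_filter, Finset.mem_univ, true_and]
        rintro ⟨k1, k2⟩
        have kF : s(x, v) ∈ F := by
          rcases Finset.mem_union.1 k1 with h | h
          · exact (Finset.mem_sdiff.1 h).1
          · exact star_sub (hS.trans hT) h
        have hvE : v ∈ EE F π := by
          by_contra hcon
          have := h4.2 v hcon (dg_pos_right kF)
          omega
        rcases hsub x hx'.1 v (mem_NN.2 ⟨hvE, kF⟩) with h | h
        · rw [h, Sym2.eq_swap] at k1; exact absurd k1 (htok x hx)
        · by_contra hvS
          rcases hcov v h with hh | hh
          · have := h5 v (Finset.mem_sdiff.2 ⟨hh, hvS⟩); omega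
          · have := h6 v hh; omega)
    rw [Finset.mem_singleton] at hy; subst hy
    have hc2 : ((T \ S).erase x).card = (T \ S).card - 1 := Finset.card_erase_of_mem hx
    obtain ⟨f', g1, g2, -⟩ := pay_step (c := y) (R := (T \ S).erase x) (π := π) m hD
      (by
        intro v
        have := h4.1 v
        beta_reduce
        split_ifs with k1 k2
        · rw [k1, (mem_EE.1 ha).1]; exact Nat.zero_le _
        · omega
        · omega) (mem_EE.1 ha).1
      (fun h => haT (Finset.mem_sdiff.1 (Finset.mem_of_mem_erase h)).1) (by
        intro v hv
        have hv' := Finset.mem_erase.1 hv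
        rw [Finset.mem_insert, not_or]
        refine ⟨?_, htok v hv'.2⟩
        rw [Sym2.eq_swap (a := x), Sym2.congr_right]; exact hv'.1) (by omega)
      (by beta_reduce; rw [if_pos rfl]; omega)
    have e : insert s(x, y) (F \ star y T ∪ star y S) ∪ star y ((T \ S).erase x) = F := by
      have e1 : insert s(x, y) (F \ star y T ∪ star y S) ∪ star y ((T \ S).erase x) =
          F \ star y T ∪ (star y S ∪ insert s(y, x) (star y ((T \ S).erase x))) := by
        rw [Sym2.eq_swap]; ext; simp only [Finset.mem_union, Finset.mem_insert]; tauto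
      rw [e1, ← star_insert, Finset.insert_erase hx, ← star_split hS,
        Finset.sdiff_union_of_subset (star_sub hT)]
    rw [e] at g1
    exact ⟨N + m, by omega, g1.mono g2 le_rfl⟩

theorem mid_path {G : Finset (Sym2 V)} {f : V → ℕ} {N : ℕ} {a b : V} {X Y : Finset V}
    (h : Dec G f N) (hab : a ≠ b) (haX : a ∉ X) (hbX : b ∉ X) (haY : a ∉ Y) (hbY : b ∉ Y)
    (hXY : ∀ v ∈ X, v ∉ Y) (hX : X.card ≤ 1) (hY : Y.card ≤ 1)
    (hXG : ∀ x ∈ X, s(a, x) ∉ G) (hYG : ∀ x ∈ Y, s(b, x) ∉ G) (habG : s(a, b) ∉ G) :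
    Dec (G ∪ (star a X ∪ star b Y ∪ {s(a, b)})) f (N + 1) := by
  have hd : Disjoint (star a X ∪ star b Y ∪ {s(a, b)}) G := by
    rw [Finset.disjoint_left]
    intro e he
    simp only [Finset.mem_union, Finset.mem_singleton] at he
    rcases he with (h | h) | h
    · obtain ⟨x, hx, rfl⟩ := mem_star.1 h; exact hXG x hx
    · obtain ⟨x, hx, rfl⟩ := mem_star.1 h; exact hYG x hx
    · rw [h]; exact habG
  have hx3 : X = ∅ ∨ ∃ x, X = {x} := by
    rcases Nat.lt_or_ge X.card 1 with h | h
    · left; rw [← Finset.card_eq_zero]; omega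
    · right; exact Finset.card_eq_one.1 (by omega)
  have hy3 : Y = ∅ ∨ ∃ x, Y = {x} := by
    rcases Nat.lt_or_ge Y.card 1 with h | h
    · left; rw [← Finset.card_eq_zero]; omega
    · right; exact Finset.card_eq_one.1 (by omega)
  rcases hx3 with rfl | ⟨x, rfl⟩ <;> rcases hy3 with rfl | ⟨y, rfl⟩
  · refine (h.addPath [a, b] (by simp) (by simp [hab]) _ ?_ hd).mono (by intro v; simp) le_rfl
    simp [star, edg]
  · simp only [Finset.mem_singleton] at haY hbY
    refine (h.addPath [a, b, y] (by simp) (by simp [hab, haY, hbY]) _ ?_ hd).mono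
      (by intro v; simp) le_rfl
    have e1 : star a ∅ ∪ star b {y} ∪ {s(a, b)} = insert s(a, b) {s(b, y)} := by
      ext; simp [star, or_comm]
    rw [e1, Finset.insert_val_of_notMem]
    · simp [edg]
    · rw [Finset.mem_singleton, Sym2.eq_iff]; tauto
  · simp only [Finset.mem_singleton] at haX hbX
    refine (h.addPath [x, a, b] (by simp) (by simp [hab, Ne.symm haX, Ne.symm hbX]) _ ?_ hd).mono
      (by intro v; simp) le_rfl
    have e1 : star a {x} ∪ star b ∅ ∪ {s(a, b)} = insert s(x, a) {s(a, b)} := by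
      ext; simp [star, Sym2.eq_swap]
    rw [e1, Finset.insert_val_of_notMem]
    · simp [edg]
    · rw [Finset.mem_singleton, Sym2.eq_iff]; tauto
  · simp only [Finset.mem_singleton] at haX hbX haY hbY
    have hxy : x ≠ y := by
      have := hXY x (by simp); simpa using this
    refine (h.addPath [x, a, b, y] (by simp)
      (by simp [hab, Ne.symm haX, Ne.symm hbX, haY, hbY, hxy]) _ ?_ hd).mono
      (by intro v; simp) le_rfl
    have e1 : star a {x} ∪ star b {y} ∪ {s(a, b)} =
        insert s(x, a) (insert s(a, b) {s(b, y)}) := by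
      ext; simp [star, Sym2.eq_swap, or_comm]
    rw [e1, Finset.insert_val_of_notMem, Finset.insert_val_of_notMem]
    · simp [edg]
    · rw [Finset.mem_singleton, Sym2.eq_iff]; tauto
    · rw [Finset.mem_insert, Finset.mem_singleton, Sym2.eq_iff, Sym2.eq_iff]; tauto

end PD

namespace PD
variable {V : Type*} [DecidableEq V] [Fintype V]

set_option maxHeartbeats 2000000 in
/-- two stars together with the edge between the centres -/
theorem two_edge {F : Finset (Sym2 V)} {π : V → ℕ} (hH : Hyp F) (hF : ND F) {a b : V}
    (ha : a ∈ EE F π) (hb : b ∈ NN F π a) {T Y : Finset V} (hT : T ⊆ NN F π a)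
    (hY : Y ⊆ NN F π b) (hbT : b ∉ T) (haY : a ∉ Y) (hdis : ∀ v ∈ T, v ∉ Y)
    (hcova : ∀ v ∈ NN F π a, v ∈ T ∨ v = b) (hcovb : ∀ v ∈ NN F π b, v ∈ T ∨ v ∈ Y ∨ v = a)
    (m n : ℕ) (hm : T.card = 6 * m + 2 ∨ T.card = 6 * m + 3)
    (hn : Y.card = 6 * n + 2 ∨ Y.card = 6 * n + 3) : Goal F π := by
  have hbE := (mem_NN.1 hb).1
  have habF := (mem_NN.1 hb).2
  have haT : a ∉ T := fun h => not_mem_NN hF a (hT h)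
  have hbY : b ∉ Y := fun h => not_mem_NN hF b (hY h)
  have hab : a ≠ b := by rintro rfl; exact not_mem_NN hF a hb
  have hTE : ∀ v ∈ T, v ∈ EE F π := fun v hv => (mem_NN.1 (hT hv)).1
  have hYE : ∀ v ∈ Y, v ∈ EE F π := fun v hv => (mem_NN.1 (hY hv)).1
  have hbT' : insert b T ⊆ NN F π a := Finset.insert_subset hb hT
  have haT' : a ∉ insert b T := by rw [Finset.mem_insert, not_or]; exact ⟨hab, haT⟩
  set τ := star a (insert b T) ∪ star b Y with hτdef
  have hτ : τ ⊆ F := Finset.union_subset (star_sub hbT') (star_sub hY)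
  have hdisτ : Disjoint (star a (insert b T)) (star b Y) := by
    rw [Finset.disjoint_left]
    intro e h1 h2
    obtain ⟨x, hx, rfl⟩ := mem_star.1 h1
    rw [mk_mem_star'] at h2
    rcases h2 with ⟨h, _⟩ | ⟨_, h⟩
    · exact hab h
    · exact haY h
  have hdg : ∀ v, dg τ v = (if v = a then T.card + 1 else if v ∈ insert b T then 1 else 0) +
      (if v = b then Y.card else if v ∈ Y then 1 else 0) := by
    intro v
    rw [hτdef, dg_union hdisτ, dg_star haT', dg_star hbY, Finset.card_insert_of_notMem hbT]
  have hWcard : (T ∪ Y ∪ od (T.card + 1) a ∪ od (Y.card + 1) b).card =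
      T.card + Y.card + (T.card + 1) % 2 + (Y.card + 1) % 2 := by
    rw [Finset.card_union_of_disjoint, Finset.card_union_of_disjoint,
      Finset.card_union_of_disjoint, od_card, od_card]
    · rw [Finset.disjoint_left]; exact hdis
    · rw [Finset.disjoint_left]; intro v h1 h2
      rw [(mem_od.1 h2).1] at h1
      rcases Finset.mem_union.1 h1 with h | h
      · exact haT h
      · exact haY h
    · rw [Finset.disjoint_left]; intro v h1 h2
      rw [(mem_od.1 h2).1] at h1
      simp only [Finset.mem_union, mem_od] at h1
      rcases h1 with (h | h) | h
      · exact hbT h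
      · exact hbY h
      · exact hab h.1.symm
  obtain ⟨N, f, hN, hD, hI, hfW, -⟩ := start (τ := τ) hH hF hτ
    ⟨s(a, b), Finset.mem_union_left _ (mk_mem_star.2 (by simp))⟩ ∅
    (T ∪ Y ∪ od (T.card + 1) a ∪ od (Y.card + 1) b) (by simp)
    (by
      intro v hv
      simp only [Finset.mem_union, mem_od] at hv
      rcases hv with ((h | h) | h) | h
      · exact hTE v h
      · exact hYE v h
      · rw [h.1]; exact ha
      · rw [h.1]; exact hbE) (by simp) (by simp)
    (by
      intro v hv
      rw [hdg]
      simp only [Finset.mem_union, mem_od] at hv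
      rcases hv with ((h | h) | h) | h
      · rw [if_neg (by rintro rfl; exact haT h), if_pos (by simp [h]),
          if_neg (by rintro rfl; exact hbT h), if_neg (hdis v h)]; exact odd_one
      · have h1 : v ≠ b := by rintro rfl; exact hbY h
        have h2 : v ∉ insert b T := by
          rw [Finset.mem_insert, not_or]; exact ⟨h1, fun hh => hdis v hh h⟩
        rw [if_neg (by rintro rfl; exact haY h), if_neg h2, if_neg h1, if_pos h]; exact odd_one
      · obtain ⟨rfl, h⟩ := h
        rw [if_pos rfl, if_neg hab, if_neg haY]; exact Nat.odd_iff.2 h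
      · obtain ⟨rfl, h⟩ := h
        rw [if_neg hab.symm, if_pos (by simp), if_pos rfl, add_comm]; exact Nat.odd_iff.2 h)
    (by
      intro v hv
      have h1 : v ≠ a := by rintro rfl; exact hv ha
      have h2 : v ≠ b := by rintro rfl; exact hv hbE
      have h3 : v ∉ insert b T := by
        rw [Finset.mem_insert, not_or]; exact ⟨h2, fun h => hv (hTE v h)⟩
      rw [hdg, if_neg h1, if_neg h3, if_neg h2, if_neg (fun h => hv (hYE v h))])
  rw [hWcard, Finset.card_empty] at hN
  have hfT : ∀ v ∈ T, 1 ≤ f v := fun v hv => hfW v (by simp [hv])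
  have hfY : ∀ v ∈ Y, 1 ≤ f v := fun v hv => hfW v (by simp [hv])
  have hYτ : ∀ x ∈ Y, s(b, x) ∈ τ := fun x hx => Finset.mem_union_right _ (mk_mem_star.2 hx)
  have hTτ : ∀ x ∈ T, s(a, x) ∈ τ :=
    fun x hx => Finset.mem_union_left _ (mk_mem_star.2 (by simp [hx]))
  have habτ : s(a, b) ∈ τ := Finset.mem_union_left _ (mk_mem_star.2 (by simp))
  -- absorb at b
  obtain ⟨S, hS, f1, h1, h2, h3, h4, h5, h6⟩ := star_step hD Finset.sdiff_subset hI hY hbY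
    (fun x hx h => (Finset.mem_sdiff.1 h).2 (hYτ x hx)) hfY ∅ (by
      intro v hv _ h
      rcases hcovb v hv with hh | hh | hh
      · exact hfT v hh
      · exact hfY v hh
      · rw [hh, Sym2.eq_swap] at h; exact absurd habτ (Finset.mem_sdiff.1 h).2)
  have htok : ∀ x ∈ insert b T, s(a, x) ∉ F \ τ ∪ star b S := by
    intro x hx h
    rcases Finset.mem_union.1 h with h | h
    · exact (Finset.mem_sdiff.1 h).2 (Finset.mem_union_left _ (mk_mem_star.2 hx))
    · rw [mk_mem_star'] at h
      rcases h with ⟨h, _⟩ | ⟨_, h⟩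
      · exact hab h
      · exact haY (hS h)
  -- absorb at a
  obtain ⟨S', hS', f2, g1, g2, g3, g4, g5, g6⟩ := star_step h2 h6 h3 hT haT
    (fun x hx => htok x (by simp [hx])) (fun x hx => (hfT x hx).trans
      (h4 x (fun h => hdis x hx (hS h)))) ∅ (by
      intro v hv _ h
      exact absurd h (htok v (by
        rw [Finset.mem_insert]
        rcases hcova v hv with hh | hh
        · exact Or.inr hh
        · exact Or.inl hh)))
  have hc := Finset.card_sdiff_add_card_eq_card hS
  have hc' := Finset.card_sdiff_add_card_eq_card hS'
  rw [Finset.card_empty] at h1 g1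
  have hbS' : b ∉ S' := fun h => hbT (hS' h)
  have hfb := g4 b hbS'
  obtain ⟨X, hX, hXc, hXr⟩ : ∃ X ⊆ T \ S', X.card ≤ 1 ∧ ((T \ S') \ X).card ≤ 3 * m := by
    by_cases hh : (T \ S').card ≤ 3 * m
    · exact ⟨∅, by simp, by simp, by simpa using hh⟩
    · obtain ⟨X, hX, hX1⟩ := Finset.exists_subset_card_eq (show 1 ≤ (T \ S').card by omega)
      exact ⟨X, hX, by omega, by rw [Finset.card_sdiff_of_subset hX]; omega⟩
  obtain ⟨Z, hZ, hZc, hZr⟩ : ∃ X ⊆ Y \ S, X.card ≤ 1 ∧ ((Y \ S) \ X).card ≤ 3 * n := by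
    by_cases hh : (Y \ S).card ≤ 3 * n
    · exact ⟨∅, by simp, by simp, by simpa using hh⟩
    · obtain ⟨X, hX, hX1⟩ := Finset.exists_subset_card_eq (show 1 ≤ (Y \ S).card by omega)
      exact ⟨X, hX, by omega, by rw [Finset.card_sdiff_of_subset hX]; omega⟩
  have tokA : ∀ x ∈ T \ S', s(a, x) ∉ F \ τ ∪ star b S ∪ star a S' := by
    intro x hx h
    have hx' := Finset.mem_sdiff.1 hx
    rcases Finset.mem_union.1 h with h | h
    · exact htok x (by simp [hx'.1]) h
    · rw [mk_mem_star] at h; exact hx'.2 h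
  have tokB : ∀ x ∈ Y \ S, s(b, x) ∉ F \ τ ∪ star b S ∪ star a S' := by
    intro x hx h
    have hx' := Finset.mem_sdiff.1 hx
    rcases Finset.mem_union.1 h with h | h
    · rcases Finset.mem_union.1 h with h | h
      · exact (Finset.mem_sdiff.1 h).2 (hYτ x hx'.1)
      · rw [mk_mem_star] at h; exact hx'.2 h
    · rw [mk_mem_star'] at h
      rcases h with ⟨h, _⟩ | ⟨_, h⟩
      · exact hab h.symm
      · exact hbS' h
  have tokAB : s(a, b) ∉ F \ τ ∪ star b S ∪ star a S' := by
    intro h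
    rcases Finset.mem_union.1 h with h | h
    · exact htok b (by simp) h
    · rw [mk_mem_star] at h; exact hbS' h
  have hXT : X ⊆ T := hX.trans Finset.sdiff_subset
  have hZY : Z ⊆ Y := hZ.trans Finset.sdiff_subset
  have k1 := mid_path g2 hab (fun h => haT (hXT h)) (fun h => hbT (hXT h)) (fun h => haY (hZY h))
    (fun h => hbY (hZY h)) (fun v h h' => hdis v (hXT h) (hZY h')) hXc hZc
    (fun x hx => tokA x (hX hx)) (fun x hx => tokB x (hZ hx)) tokAB
  obtain ⟨f3, l1, l2, l3⟩ := pay_step (c := a) (R := (T \ S') \ X) m k1 g3.1 (mem_EE.1 ha).1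
    (fun h => haT (Finset.mem_sdiff.1 (Finset.mem_sdiff.1 h).1).1) (by
      intro x hx h
      have hx' := Finset.mem_sdiff.1 hx
      have hxT := (Finset.mem_sdiff.1 hx'.1).1
      rcases Finset.mem_union.1 h with h | h
      · exact tokA x hx'.1 h
      · simp only [Finset.mem_union, Finset.mem_singleton] at h
        rcases h with (h | h) | h
        · rw [mk_mem_star] at h; exact hx'.2 h
        · rw [mk_mem_star'] at h
          rcases h with ⟨h, _⟩ | ⟨_, h⟩
          · exact hab h
          · exact haY (hZY h)
        · rw [Sym2.congr_right] at h; rw [h] at hxT; exact hbT hxT) hXr (by omega)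
  obtain ⟨f4, p1, p2, -⟩ := pay_step (c := b) (R := (Y \ S) \ Z) n l1 l2 (mem_EE.1 hbE).1
    (fun h => hbY (Finset.mem_sdiff.1 (Finset.mem_sdiff.1 h).1).1) (by
      intro x hx h
      have hx' := Finset.mem_sdiff.1 hx
      have hxY := (Finset.mem_sdiff.1 hx'.1).1
      rcases Finset.mem_union.1 h with h | h
      · rcases Finset.mem_union.1 h with h | h
        · exact tokB x hx'.1 h
        · simp only [Finset.mem_union, Finset.mem_singleton] at h
          rcases h with (h | h) | h
          · rw [mk_mem_star'] at h
            rcases h with ⟨h, _⟩ | ⟨_, h⟩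
            · exact hab h.symm
            · exact hbT (hXT h)
          · rw [mk_mem_star] at h; exact hx'.2 h
          · rw [Sym2.eq_swap (a := a), Sym2.congr_right] at h; rw [h] at hxY; exact haY hxY
      · rw [mk_mem_star'] at h
        rcases h with ⟨h, _⟩ | ⟨_, h⟩
        · exact hab h.symm
        · exact hbT (Finset.mem_sdiff.1 (Finset.mem_sdiff.1 h).1).1) hZr (by
      rw [l3 b hab.symm]; omega)
  have hfin := p1.mono p2 le_rfl
  refine ⟨N + 1 + m + n, by omega, ?_⟩
  convert hfin using 1
  have e1 : τ = insert s(a, b) (star a S' ∪ (star a X ∪ star a ((T \ S') \ X)) ∪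
        (star b S ∪ (star b Z ∪ star b ((Y \ S) \ Z)))) := by
      rw [← star_split hX, ← star_split hZ, ← star_split hS, ← star_split hS', hτdef, star_insert,
        Finset.insert_union]
  have e2 : F = F \ τ ∪ τ := (Finset.sdiff_union_of_subset hτ).symm
  conv_lhs => rw [e2]
  generalize F \ τ = G
  rw [e1]
  simp only [Finset.insert_eq]
  ac_rfl

end PD

namespace PD
variable {V : Type*} [DecidableEq V] [Fintype V]

set_option maxHeartbeats 2000000 in
/-- two stars, the edge between the centres is kept -/
theorem two_star {F : Finset (Sym2 V)} {π : V → ℕ} (hH : Hyp F) (hF : ND F) {a b : V}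
    (ha : a ∈ EE F π) (hb : b ∈ NN F π a) {T K Ta P : Finset V} (hT : T ⊆ NN F π b)
    (hK : K ⊆ NN F π b) (hTa : Ta ⊆ NN F π a) (hP : P ⊆ EE F π)
    (dT : ∀ v ∈ T, v ≠ a ∧ v ≠ b ∧ v ∉ K ∧ v ∉ Ta ∧ v ∉ P)
    (dK : ∀ v ∈ K, v ≠ a ∧ v ≠ b ∧ v ∉ Ta ∧ v ∉ P)
    (dTa : ∀ v ∈ Ta, v ≠ a ∧ v ≠ b ∧ v ∉ P)
    (dP : ∀ v ∈ P, v ≠ a ∧ v ≠ b)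
    (cb : ∀ v ∈ NN F π b, v ∈ T ∨ v ∈ K ∨ v ∈ Ta ∨ v ∈ P ∨ v = a)
    (ca : ∀ v ∈ NN F π a, v ∈ Ta ∨ v ∈ K ∨ v ∈ P ∨ v = b)
    (hodd : Ta.card % 2 = 1) (qb qa : ℕ)
    (n1 : T.card / 2 + K.card ≤ 3 * qb)
    (n2 : 1 ≤ T.card - T.card / 2 + (T.card + K.card) % 2)
    (n3 : qb ≤ T.card - T.card / 2 + (T.card + K.card) % 2)
    (n4 : Ta.card / 2 ≤ 3 * qa) (n5 : qa ≤ Ta.card - Ta.card / 2 + 1)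
    (n6 : 6 * (qb + qa) + 2 * P.card ≤ T.card + K.card + Ta.card + 1 + (T.card + K.card) % 2) :
    Goal F π := by
  have hbE := (mem_NN.1 hb).1
  have hab : a ≠ b := by rintro rfl; exact not_mem_NN hF a hb
  have hTE : ∀ v ∈ T, v ∈ EE F π := fun v hv => (mem_NN.1 (hT hv)).1
  have hKE : ∀ v ∈ K, v ∈ EE F π := fun v hv => (mem_NN.1 (hK hv)).1
  have hTaE : ∀ v ∈ Ta, v ∈ EE F π := fun v hv => (mem_NN.1 (hTa hv)).1
  have haTa : a ∉ Ta := fun h => (dTa a h).1 rfl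
  have hbTa : b ∉ Ta := fun h => (dTa b h).2.1 rfl
  have haTK : a ∉ T ∪ K := by grind
  have hbTK : b ∉ T ∪ K := by grind
  have hbT : b ∉ T := by grind
  have dTK : Disjoint T K := by rw [Finset.disjoint_left]; grind
  have hTKc : (T ∪ K).card = T.card + K.card := Finset.card_union_of_disjoint dTK
  set τ := star b (T ∪ K) ∪ star a Ta with hτdef
  have hτ : τ ⊆ F := Finset.union_subset (star_sub (Finset.union_subset hT hK)) (star_sub hTa)
  have hdisτ : Disjoint (star b (T ∪ K)) (star a Ta) := by
    rw [Finset.disjoint_left]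
    intro e h1 h2
    obtain ⟨x, hx, rfl⟩ := mem_star.1 h1
    rw [mk_mem_star'] at h2
    grind
  have hdg : ∀ v, dg τ v = (if v = b then T.card + K.card else if v ∈ T ∪ K then 1 else 0) +
      (if v = a then Ta.card else if v ∈ Ta then 1 else 0) := by
    intro v
    rw [hτdef, dg_union hdisτ, dg_star hbTK, dg_star haTa, hTKc]
  have hWcard : (T ∪ K ∪ Ta ∪ {a} ∪ od (T.card + K.card) b).card =
      T.card + K.card + Ta.card + 1 + (T.card + K.card) % 2 := by
    rw [Finset.card_union_of_disjoint, Finset.card_union_of_disjoint,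
      Finset.card_union_of_disjoint, hTKc, od_card, Finset.card_singleton]
    · rw [Finset.disjoint_left]; grind
    · rw [Finset.disjoint_left]; grind
    · rw [Finset.disjoint_left]; intro v h1 h2
      rw [mem_od] at h2
      grind
  obtain ⟨w, hw⟩ : Ta.Nonempty := Finset.card_pos.1 (by omega)
  obtain ⟨N, f, hN, hD, hI, hfW, hfP⟩ := start (τ := τ) hH hF hτ
    ⟨s(a, w), Finset.mem_union_right _ (mk_mem_star.2 hw)⟩ P
    (T ∪ K ∪ Ta ∪ {a} ∪ od (T.card + K.card) b) hP
    (by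
      intro v hv
      simp only [Finset.mem_union, mem_od, Finset.mem_singleton] at hv
      grind)
    (by
      intro v hv
      simp only [Finset.mem_union, mem_od, Finset.mem_singleton] at hv
      grind)
    (by
      intro v hv
      rw [hdg]
      grind)
    (by
      intro v hv
      rw [hdg, Nat.odd_iff]
      simp only [Finset.mem_union, mem_od, Finset.mem_singleton] at hv
      grind)
    (by
      intro v hv
      rw [hdg]
      grind)
  rw [hWcard] at hN
  have hfT : ∀ v ∈ T, 1 ≤ f v := fun v hv => hfW v (by simp [hv])
  have hfK : ∀ v ∈ K, 1 ≤ f v := fun v hv => hfW v (by simp [hv])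
  have hfTa : ∀ v ∈ Ta, 1 ≤ f v := fun v hv => hfW v (by simp [hv])
  have hfa : 1 ≤ f a := hfW a (by simp)
  have hfb : (T.card + K.card) % 2 ≤ f b := by
    rcases Nat.mod_two_eq_zero_or_one (T.card + K.card) with h | h
    · omega
    · have := hfW b (by simp [mem_od, h])
      omega
  have tb : ∀ x ∈ T ∪ K, s(b, x) ∉ F \ τ := fun x hx h =>
    (Finset.mem_sdiff.1 h).2 (Finset.mem_union_left _ (mk_mem_star.2 hx))
  have ta : ∀ x ∈ Ta, s(a, x) ∉ F \ τ := fun x hx h =>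
    (Finset.mem_sdiff.1 h).2 (Finset.mem_union_right _ (mk_mem_star.2 hx))
  have hN1 : ∀ v, v ∈ NN F π b → 1 ≤ f v := by grind
  -- absorb at b
  obtain ⟨S, hS, f1, h1, h2, h3, h4, h5, h6⟩ := star_step hD Finset.sdiff_subset hI hT hbT
    (fun x hx => tb x (Finset.mem_union_left _ hx)) hfT ∅ (fun v hv _ _ => hN1 v hv)
  rw [Finset.card_empty] at h1
  have hc := Finset.card_sdiff_add_card_eq_card hS
  have hSn : ∀ v, v ∉ T → f v ≤ f1 v := fun v hv => h4 v (fun h => hv (hS h))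
  -- absorb at a
  obtain ⟨S', hS', f2, g1, g2, g3, g4, g5, g6⟩ := star_step h2 h6 h3 hTa haTa
    (by
      intro x hx h
      rcases Finset.mem_union.1 h with h | h
      · exact ta x hx h
      · rw [mk_mem_star'] at h; grind)
    (by
      intro x hx
      exact (hfTa x hx).trans (hSn x (fun h => (dT x h).2.2.2.1 hx))) ∅ (by
      intro v hv _ _
      rcases ca v hv with h | h | h | h
      · exact (hfTa v h).trans (hSn v (fun h' => (dT v h').2.2.2.1 h))
      · exact (hfK v h).trans (hSn v (fun h' => (dT v h').2.2.1 h))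
      · exact (hfP v h).trans (hSn v (fun h' => (dT v h').2.2.2.2 h))
      · rw [h]; omega)
  rw [Finset.card_empty] at g1
  have hc' := Finset.card_sdiff_add_card_eq_card hS'
  have hgb := g4 b (fun h => hbTa (hS' h))
  have hga := hSn a (by grind)
  obtain ⟨f3, l1, l2, l3⟩ := pay_step (c := b) (R := (T \ S) ∪ K) qb g2 g3.1 (mem_EE.1 hbE).1
    (by grind) (by
      intro x hx h
      have hx' : x ∈ T ∪ K := by grind
      have hx2 : x ∉ S := by grind
      rcases Finset.mem_union.1 h with h | h
      · rcases Finset.mem_union.1 h with h | h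
        · exact tb x hx' h
        · rw [mk_mem_star] at h; exact hx2 h
      · rw [mk_mem_star'] at h; grind)
    (by
      have := Finset.card_union_le (T \ S) K
      omega) (by omega)
  obtain ⟨f4, p1, p2, -⟩ := pay_step (c := a) (R := Ta \ S') qa l1 l2 (mem_EE.1 ha).1
    (by grind) (by
      intro x hx h
      have hx' := Finset.mem_sdiff.1 hx
      rcases Finset.mem_union.1 h with h | h
      · rcases Finset.mem_union.1 h with h | h
        · rcases Finset.mem_union.1 h with h | h
          · exact ta x hx'.1 h
          · rw [mk_mem_star'] at h; grind
        · rw [mk_mem_star] at h; exact hx'.2 h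
      · rw [mk_mem_star'] at h; grind)
    (by omega) (by rw [l3 a hab]; omega)
  have hfin := p1.mono p2 le_rfl
  refine ⟨N + qb + qa, by omega, ?_⟩
  convert hfin using 1
  have e1 : τ = star b S ∪ star b (T \ S) ∪ star b K ∪ (star a S' ∪ star a (Ta \ S')) := by
    rw [← star_split hS, ← star_split hS', hτdef, star_union]
  have e2 : F = F \ τ ∪ τ := (Finset.sdiff_union_of_subset hτ).symm
  conv_lhs => rw [e2]
  generalize F \ τ = G
  rw [e1, star_union]
  ac_rfl

end PD

namespace PD
variable {V : Type*} [DecidableEq V] [Fintype V]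

set_option maxHeartbeats 4000000 in
/-- three stars, the edges between the centres are kept -/
theorem three_star {F : Finset (Sym2 V)} {π : V → ℕ} (hH : Hyp F) (hF : ND F) {a b d : V}
    (ha : a ∈ EE F π) (hb : b ∈ EE F π) (hd : d ∈ EE F π)
    (hab : a ≠ b) (had : a ≠ d) (hbd : b ≠ d) {T K Td Ta P : Finset V} (hT : T ⊆ NN F π b)
    (hK : K ⊆ NN F π b) (hTd : Td ⊆ NN F π d) (hTa : Ta ⊆ NN F π a) (hP : P ⊆ EE F π)
    (dT : ∀ v ∈ T, v ≠ a ∧ v ≠ b ∧ v ≠ d ∧ v ∉ K ∧ v ∉ Td ∧ v ∉ Ta ∧ v ∉ P)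
    (dK : ∀ v ∈ K, v ≠ a ∧ v ≠ b ∧ v ≠ d ∧ v ∉ Td ∧ v ∉ Ta ∧ v ∉ P)
    (dTd : ∀ v ∈ Td, v ≠ a ∧ v ≠ b ∧ v ≠ d ∧ v ∉ Ta ∧ v ∉ P)
    (dTa : ∀ v ∈ Ta, v ≠ a ∧ v ≠ b ∧ v ≠ d ∧ v ∉ P)
    (dP : ∀ v ∈ P, v ≠ a ∧ v ≠ b ∧ v ≠ d)
    (cb : ∀ v ∈ NN F π b, v ∈ T ∨ v ∈ K ∨ v ∈ Td ∨ v ∈ Ta ∨ v ∈ P ∨ v = a ∨ v = d)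
    (cd : ∀ v ∈ NN F π d, v ∈ T ∨ v ∈ K ∨ v ∈ Td ∨ v ∈ Ta ∨ v ∈ P ∨ v = a ∨ v = b)
    (ca : ∀ v ∈ NN F π a, v ∈ Ta ∨ v ∈ K ∨ v ∈ P ∨ v = b ∨ v = d)
    (hodd : Ta.card % 2 = 1) (z1 z2 q1 q2 qa : ℕ)
    (hz1 : Td.card % 2 = 0 → 1 ≤ z1) (hz2 : (T ∩ NN F π d).card ≤ z2)
    (n1 : (T.card + z1) / 2 + K.card ≤ 3 * q1)
    (n2 : 1 + (T.card + z1) / 2 ≤ T.card + (T.card + K.card) % 2)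
    (n3 : q1 + (T.card + z1) / 2 ≤ T.card + (T.card + K.card) % 2)
    (m1 : (Td.card + z2) / 2 ≤ 3 * q2)
    (m2 : 1 + (Td.card + z2) / 2 ≤ Td.card + Td.card % 2)
    (m3 : q2 + (Td.card + z2) / 2 ≤ Td.card + Td.card % 2)
    (n4 : Ta.card / 2 ≤ 3 * qa) (n5 : qa ≤ Ta.card - Ta.card / 2 + 1)
    (n6 : 6 * (q1 + q2 + qa) + 2 * P.card ≤ T.card + K.card + Td.card + Ta.card + 1 +
      (T.card + K.card) % 2 + Td.card % 2) :
    Goal F π := by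
  have hTE : ∀ v ∈ T, v ∈ EE F π := fun v hv => (mem_NN.1 (hT hv)).1
  have hKE : ∀ v ∈ K, v ∈ EE F π := fun v hv => (mem_NN.1 (hK hv)).1
  have hTdE : ∀ v ∈ Td, v ∈ EE F π := fun v hv => (mem_NN.1 (hTd hv)).1
  have hTaE : ∀ v ∈ Ta, v ∈ EE F π := fun v hv => (mem_NN.1 (hTa hv)).1
  have haTa : a ∉ Ta := fun h => (dTa a h).1 rfl
  have hbTa : b ∉ Ta := fun h => (dTa b h).2.1 rfl
  have hdTa : d ∉ Ta := fun h => (dTa d h).2.2.1 rfl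
  have haTd : a ∉ Td := fun h => (dTd a h).1 rfl
  have hbTd : b ∉ Td := fun h => (dTd b h).2.1 rfl
  have hdTd : d ∉ Td := fun h => (dTd d h).2.2.1 rfl
  have haTK : a ∉ T ∪ K := by grind
  have hbTK : b ∉ T ∪ K := by grind
  have hdTK : d ∉ T ∪ K := by grind
  have hbT : b ∉ T := by grind
  have dTK : Disjoint T K := by rw [Finset.disjoint_left]; grind
  have hTKc : (T ∪ K).card = T.card + K.card := Finset.card_union_of_disjoint dTK
  set τ := star b (T ∪ K) ∪ star d Td ∪ star a Ta with hτdef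
  have hτ : τ ⊆ F := Finset.union_subset (Finset.union_subset
    (star_sub (Finset.union_subset hT hK)) (star_sub hTd)) (star_sub hTa)
  have hdisτ1 : Disjoint (star b (T ∪ K)) (star d Td) := by
    rw [Finset.disjoint_left]
    intro e h1 h2
    obtain ⟨x, hx, rfl⟩ := mem_star.1 h1
    rw [mk_mem_star'] at h2
    grind
  have hdisτ : Disjoint (star b (T ∪ K) ∪ star d Td) (star a Ta) := by
    rw [Finset.disjoint_left]
    intro e h1 h2
    rcases Finset.mem_union.1 h1 with h1 | h1
    · obtain ⟨x, hx, rfl⟩ := mem_star.1 h1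
      rw [mk_mem_star'] at h2
      grind
    · obtain ⟨x, hx, rfl⟩ := mem_star.1 h1
      rw [mk_mem_star'] at h2
      grind
  have hdg : ∀ v, dg τ v = (if v = b then T.card + K.card else if v ∈ T ∪ K then 1 else 0) +
      (if v = d then Td.card else if v ∈ Td then 1 else 0) +
      (if v = a then Ta.card else if v ∈ Ta then 1 else 0) := by
    intro v
    rw [hτdef, dg_union hdisτ, dg_union hdisτ1, dg_star hbTK, dg_star haTa, dg_star hdTd, hTKc]
  have hWcard : (T ∪ K ∪ Td ∪ Ta ∪ {a} ∪ od (T.card + K.card) b ∪ od Td.card d).card =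
      T.card + K.card + Td.card + Ta.card + 1 + (T.card + K.card) % 2 + Td.card % 2 := by
    rw [Finset.card_union_of_disjoint, Finset.card_union_of_disjoint,
      Finset.card_union_of_disjoint, Finset.card_union_of_disjoint,
      Finset.card_union_of_disjoint, hTKc, od_card, od_card, Finset.card_singleton]
    · rw [Finset.disjoint_left]; grind
    · rw [Finset.disjoint_left]; grind
    · rw [Finset.disjoint_left]; grind
    · rw [Finset.disjoint_left]; intro v h1 h2
      rw [mem_od] at h2
      grind
    · rw [Finset.disjoint_left]; intro v h1 h2
      rw [mem_od] at h2
      rw [h2.1] at h1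
      simp only [Finset.mem_union, mem_od, Finset.mem_singleton] at h1 hdTK
      grind
  obtain ⟨w, hw⟩ : Ta.Nonempty := Finset.card_pos.1 (by omega)
  obtain ⟨N, f, hN, hD, hI, hfW, hfP⟩ := start (τ := τ) hH hF hτ
    ⟨s(a, w), Finset.mem_union_right _ (mk_mem_star.2 hw)⟩ P
    (T ∪ K ∪ Td ∪ Ta ∪ {a} ∪ od (T.card + K.card) b ∪ od Td.card d) hP
    (by
      intro v hv
      simp only [Finset.mem_union, mem_od, Finset.mem_singleton] at hv
      grind)
    (by
      intro v hv
      simp only [Finset.mem_union, mem_od, Finset.mem_singleton] at hv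
      grind)
    (by
      intro v hv
      rw [hdg]
      grind)
    (by
      intro v hv
      rw [hdg, Nat.odd_iff]
      simp only [Finset.mem_union, mem_od, Finset.mem_singleton] at hv
      grind)
    (by
      intro v hv
      rw [hdg]
      grind)
  rw [hWcard] at hN
  have hfT : ∀ v ∈ T, 1 ≤ f v := fun v hv => hfW v (by simp [hv])
  have hfK : ∀ v ∈ K, 1 ≤ f v := fun v hv => hfW v (by simp [hv])
  have hfTd : ∀ v ∈ Td, 1 ≤ f v := fun v hv => hfW v (by simp [hv])
  have hfTa : ∀ v ∈ Ta, 1 ≤ f v := fun v hv => hfW v (by simp [hv])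
  have hfa : 1 ≤ f a := hfW a (by simp)
  have hfb : (T.card + K.card) % 2 ≤ f b := by
    rcases Nat.mod_two_eq_zero_or_one (T.card + K.card) with h | h
    · omega
    · have := hfW b (by simp [mem_od, h])
      omega
  have hfd : Td.card % 2 ≤ f d := by
    rcases Nat.mod_two_eq_zero_or_one Td.card with h | h
    · omega
    · have := hfW d (by simp [mem_od, h])
      omega
  have tb : ∀ x ∈ T ∪ K, s(b, x) ∉ F \ τ := fun x hx h =>
    (Finset.mem_sdiff.1 h).2 (Finset.mem_union_left _ (Finset.mem_union_left _ (mk_mem_star.2 hx)))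
  have td : ∀ x ∈ Td, s(d, x) ∉ F \ τ := fun x hx h =>
    (Finset.mem_sdiff.1 h).2 (Finset.mem_union_left _ (Finset.mem_union_right _ (mk_mem_star.2 hx)))
  have ta : ∀ x ∈ Ta, s(a, x) ∉ F \ τ := fun x hx h =>
    (Finset.mem_sdiff.1 h).2 (Finset.mem_union_right _ (mk_mem_star.2 hx))
  -- absorb at b
  obtain ⟨Z1, hZ1c, hZ1⟩ : ∃ Z : Finset V, Z.card ≤ z1 ∧ (d ∉ Z → 1 ≤ f d) := by
    rcases Nat.mod_two_eq_zero_or_one Td.card with h | h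
    · exact ⟨{d}, by rw [Finset.card_singleton]; exact hz1 h, fun h => absurd (by simp) h⟩
    · exact ⟨∅, by simp, fun _ => by omega⟩
  obtain ⟨S, hS, f1, h1, h2, h3, h4, h5, h6⟩ := star_step hD Finset.sdiff_subset hI hT hbT
    (fun x hx => tb x (Finset.mem_union_left _ hx)) hfT Z1 (by
      intro v hv hvZ _
      rcases cb v hv with h | h | h | h | h | h | h
      · exact hfT v h
      · exact hfK v h
      · exact hfTd v h
      · exact hfTa v h
      · exact hfP v h
      · rw [h]; exact hfa
      · rw [h] at hvZ ⊢; exact hZ1 hvZ)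
  have hc := Finset.card_sdiff_add_card_eq_card hS
  have hSn : ∀ v, v ∉ T → f v ≤ f1 v := fun v hv => h4 v (fun h => hv (hS h))
  -- absorb at d
  obtain ⟨S2, hS2, f2, i1, i2, i3, i4, i5, i6⟩ := star_step h2 h6 h3 hTd hdTd
    (by
      intro x hx h
      rcases Finset.mem_union.1 h with h | h
      · exact td x hx h
      · rw [mk_mem_star'] at h; grind)
    (by
      intro x hx
      exact (hfTd x hx).trans (hSn x (fun h => (dT x h).2.2.2.2.1 hx))) (T ∩ NN F π d) (by
      intro v hv hvZ _
      rcases cd v hv with h | h | h | h | h | h | h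
      · exact absurd (Finset.mem_inter.2 ⟨h, hv⟩) hvZ
      · exact (hfK v h).trans (hSn v (fun h' => (dT v h').2.2.2.1 h))
      · exact (hfTd v h).trans (hSn v (fun h' => (dT v h').2.2.2.2.1 h))
      · exact (hfTa v h).trans (hSn v (fun h' => (dT v h').2.2.2.2.2.1 h))
      · exact (hfP v h).trans (hSn v (fun h' => (dT v h').2.2.2.2.2.2 h))
      · rw [h]; exact hfa.trans (hSn a (fun h' => (dT a h').1 rfl))
      · rw [h]; omega)
  have hc2 := Finset.card_sdiff_add_card_eq_card hS2
  have hSn2 : ∀ v, v ∉ T → v ∉ Td → f v ≤ f2 v := fun v hv hv2 =>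
    (hSn v hv).trans (i4 v (fun h => hv2 (hS2 h)))
  have hib := i4 b (fun h => hbTd (hS2 h))
  have hid := hSn d (fun h' => (dT d h').2.2.1 rfl)
  -- absorb at a
  obtain ⟨S', hS', f3, g1, g2, g3, g4, g5, g6⟩ := star_step i2 i6 i3 hTa haTa
    (by
      intro x hx h
      rcases Finset.mem_union.1 h with h | h
      · rcases Finset.mem_union.1 h with h | h
        · exact ta x hx h
        · rw [mk_mem_star'] at h; grind
      · rw [mk_mem_star'] at h; grind)
    (by
      intro x hx
      exact (hfTa x hx).trans (hSn2 x (fun h => (dT x h).2.2.2.2.2.1 hx)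
        (fun h => (dTd x h).2.2.2.1 hx))) ∅ (by
      intro v hv _ _
      rcases ca v hv with h | h | h | h | h
      · exact (hfTa v h).trans (hSn2 v (fun h' => (dT v h').2.2.2.2.2.1 h)
          (fun h' => (dTd v h').2.2.2.1 h))
      · exact (hfK v h).trans (hSn2 v (fun h' => (dT v h').2.2.2.1 h)
          ((dK v h).2.2.2.1))
      · exact (hfP v h).trans (hSn2 v (fun h' => (dT v h').2.2.2.2.2.2 h)
          (fun h' => (dTd v h').2.2.2.2 h))
      · rw [h]; omega
      · rw [h]; omega)
  rw [Finset.card_empty] at g1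
  have hc' := Finset.card_sdiff_add_card_eq_card hS'
  have hgb := g4 b (fun h => hbTa (hS' h))
  have hgd := g4 d (fun h => hdTa (hS' h))
  have hga := hSn2 a (by grind) haTd
  have tb2 : ∀ x ∈ (T \ S) ∪ K, s(b, x) ∉ F \ τ ∪ star b S ∪ star d S2 ∪ star a S' := by
    intro x hx h
    have hx' : x ∈ T ∪ K := by grind
    have hx2 : x ∉ S := by grind
    rcases Finset.mem_union.1 h with h | h
    · rcases Finset.mem_union.1 h with h | h
      · rcases Finset.mem_union.1 h with h | h
        · exact tb x hx' h
        · rw [mk_mem_star] at h; exact hx2 h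
      · rw [mk_mem_star'] at h; grind
    · rw [mk_mem_star'] at h; grind
  have td2 : ∀ x ∈ Td \ S2, s(d, x) ∉ F \ τ ∪ star b S ∪ star d S2 ∪ star a S' := by
    intro x hx h
    have hx' := Finset.mem_sdiff.1 hx
    rcases Finset.mem_union.1 h with h | h
    · rcases Finset.mem_union.1 h with h | h
      · rcases Finset.mem_union.1 h with h | h
        · exact td x hx'.1 h
        · rw [mk_mem_star'] at h; grind
      · rw [mk_mem_star] at h; exact hx'.2 h
    · rw [mk_mem_star'] at h; grind
  have ta2 : ∀ x ∈ Ta \ S', s(a, x) ∉ F \ τ ∪ star b S ∪ star d S2 ∪ star a S' := by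
    intro x hx h
    have hx' := Finset.mem_sdiff.1 hx
    rcases Finset.mem_union.1 h with h | h
    · rcases Finset.mem_union.1 h with h | h
      · rcases Finset.mem_union.1 h with h | h
        · exact ta x hx'.1 h
        · rw [mk_mem_star'] at h; grind
      · rw [mk_mem_star'] at h; grind
    · rw [mk_mem_star] at h; exact hx'.2 h
  obtain ⟨f4, l1, l2, l3⟩ := pay_step (c := b) (R := (T \ S) ∪ K) q1 g2 g3.1 (mem_EE.1 hb).1
    (by grind) tb2
    (by
      have := Finset.card_union_le (T \ S) K
      omega) (by omega)
  obtain ⟨f5, o1, o2, o3⟩ := pay_step (c := d) (R := Td \ S2) q2 l1 l2 (mem_EE.1 hd).1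
    (by grind) (by
      intro x hx h
      have hx' := Finset.mem_sdiff.1 hx
      rcases Finset.mem_union.1 h with h | h
      · exact td2 x hx h
      · rw [mk_mem_star'] at h; grind)
    (by omega) (by rw [l3 d hbd.symm]; omega)
  obtain ⟨f6, p1, p2, -⟩ := pay_step (c := a) (R := Ta \ S') qa o1 o2 (mem_EE.1 ha).1
    (by grind) (by
      intro x hx h
      have hx' := Finset.mem_sdiff.1 hx
      rcases Finset.mem_union.1 h with h | h
      · rcases Finset.mem_union.1 h with h | h
        · exact ta2 x hx h
        · rw [mk_mem_star'] at h; grind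
      · rw [mk_mem_star'] at h; grind)
    (by omega) (by rw [o3 a had, l3 a hab]; omega)
  have hfin := p1.mono p2 le_rfl
  refine ⟨N + q1 + q2 + qa, by omega, ?_⟩
  convert hfin using 1
  have e1 : τ = star b S ∪ star b (T \ S) ∪ star b K ∪ (star d S2 ∪ star d (Td \ S2)) ∪
      (star a S' ∪ star a (Ta \ S')) := by
    rw [← star_split hS, ← star_split hS', ← star_split hS2, hτdef, star_union]
  have e2 : F = F \ τ ∪ τ := (Finset.sdiff_union_of_subset hτ).symm
  conv_lhs => rw [e2]
  generalize F \ τ = G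
  rw [e1, star_union]
  ac_rfl

end PD

namespace PD
variable {V : Type*} [DecidableEq V] [Fintype V]

theorem disp_single {F : Finset (Sym2 V)} {π : V → ℕ} (hH : Hyp F) (hF : ND F) {a : V}
    (ha : a ∈ EE F π) (hne : (NN F π a).Nonempty)
    (hs : (NN F π a).card % 6 = 0 ∨ (NN F π a).card % 6 = 1 ∨ (NN F π a).card % 6 = 2 ∨
      (NN F π a).card % 6 = 5) : Goal F π := by
  have hpos := Finset.card_pos.2 hne
  by_cases h2 : (NN F π a).card % 6 = 2
  · obtain ⟨z, hz⟩ := hne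
    have hc := Finset.card_erase_of_mem hz
    refine single_star (T := (NN F π a).erase z) (P := {z}) hH hF ha (Finset.erase_subset _ _)
      (by intro v hv; rw [Finset.mem_singleton.1 hv]; exact (mem_NN.1 hz).1)
      (by rw [Finset.mem_singleton]; rintro rfl; exact not_mem_NN hF _ hz)
      (by intro v hv; rw [Finset.mem_singleton]; exact Finset.ne_of_mem_erase hv)
      (by intro v hv; rw [Finset.mem_erase, Finset.mem_singleton]; tauto)
      (Finset.card_pos.1 (by omega)) ((NN F π a).card / 6) (by omega)
      (by rw [Finset.card_singleton]; omega)
  · refine single_star (T := NN F π a) (P := ∅) hH hF ha subset_rfl (by simp) (by simp) (by simp)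
      (by tauto) hne (((NN F π a).card + 1) / 6) (by omega)
      (by rw [Finset.card_empty]; omega)

/-- private neighbours of `b` with respect to `a` -/
def YY (F : Finset (Sym2 V)) (π : V → ℕ) (a b : V) : Finset V := NN F π b \ insert a (NN F π a)

theorem mem_YY {F : Finset (Sym2 V)} {π : V → ℕ} {a b v : V} :
    v ∈ YY F π a b ↔ v ∈ NN F π b ∧ v ≠ a ∧ v ∉ NN F π a := by
  simp [YY]

theorem card_YY {F : Finset (Sym2 V)} {π : V → ℕ} (hF : ND F) {a b : V} (ha : a ∈ EE F π)
    (hb : b ∈ NN F π a) :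
    (NN F π b).card = 1 + (NN F π a ∩ NN F π b).card + (YY F π a b).card := by
  have h1 : insert a (NN F π a) ∩ NN F π b = insert a (NN F π a ∩ NN F π b) :=
    Finset.insert_inter_of_mem (NN_symm ha hb)
  have h2 := Finset.card_sdiff_add_card_inter (NN F π b) (insert a (NN F π a))
  rw [Finset.inter_comm, h1, Finset.card_insert_of_notMem] at h2
  · rw [YY]; omega
  · intro h; exact not_mem_NN hF a (Finset.mem_inter.1 h).1

theorem disp_edge {F : Finset (Sym2 V)} {π : V → ℕ} (hH : Hyp F) (hF : ND F) {a b : V}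
    (ha : a ∈ EE F π) (hb : b ∈ NN F π a)
    (hs : (NN F π a).card % 6 = 3 ∨ (NN F π a).card % 6 = 4)
    (hy : (YY F π a b).card % 6 = 2 ∨ (YY F π a b).card % 6 = 3) : Goal F π := by
  have hc := Finset.card_erase_of_mem hb
  refine two_edge (T := (NN F π a).erase b) (Y := YY F π a b) hH hF ha hb
    (Finset.erase_subset _ _) Finset.sdiff_subset (by simp)
    (fun h => (mem_YY.1 h).2.1 rfl)
    (fun v hv h => (mem_YY.1 h).2.2 (Finset.mem_of_mem_erase hv))
    (by intro v hv; rw [Finset.mem_erase]; tauto)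
    (by
      intro v hv
      have : v ≠ b := by rintro rfl; exact not_mem_NN hF _ hv
      rw [Finset.mem_erase, mem_YY]; tauto)
    ((NN F π a).card / 6) ((YY F π a b).card / 6) (by omega) (by omega)

theorem disp_two {F : Finset (Sym2 V)} {π : V → ℕ} (hH : Hyp F) (hF : ND F) {a b : V}
    (ha : a ∈ EE F π) (hb : b ∈ NN F π a) {K P : Finset V} (hK : K ⊆ NN F π a ∩ NN F π b)
    (hP : P ⊆ NN F π a) (hbP : b ∉ P) (hPK : ∀ v ∈ K, v ∉ P) (s y k p qb qa : ℕ)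
    (hs : (NN F π a).card = s + 1 + k + p) (hy : (YY F π a b).card = y) (hk : K.card = k)
    (hp : P.card = p) (hodd : s % 2 = 1)
    (n1 : y / 2 + k ≤ 3 * qb)
    (n2 : 1 ≤ y - y / 2 + (y + k) % 2)
    (n3 : qb ≤ y - y / 2 + (y + k) % 2)
    (n4 : s / 2 ≤ 3 * qa) (n5 : qa ≤ s - s / 2 + 1)
    (n6 : 6 * (qb + qa) + 2 * p ≤ y + k + s + 1 + (y + k) % 2) : Goal F π := by
  have hK1 : ∀ v ∈ K, v ∈ NN F π a := fun v hv => (Finset.mem_inter.1 (hK hv)).1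
  have hK2 : ∀ v ∈ K, v ∈ NN F π b := fun v hv => (Finset.mem_inter.1 (hK hv)).2
  have haa := not_mem_NN (π := π) hF a
  have hbb := not_mem_NN (π := π) hF b
  have hbK : b ∉ K := fun h => hbb (hK2 b h)
  have hcard : (NN F π a \ insert b (K ∪ P)).card = s := by
    rw [Finset.card_sdiff_of_subset, Finset.card_insert_of_notMem, Finset.card_union_of_disjoint]
    · omega
    · rw [Finset.disjoint_left]; exact hPK
    · rw [Finset.mem_union, not_or]; exact ⟨hbK, hbP⟩
    · grind
  have hab : a ≠ b := by rintro rfl; exact haa hb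
  refine two_star (T := YY F π a b) (K := K) (Ta := NN F π a \ insert b (K ∪ P)) (P := P)
    hH hF ha hb Finset.sdiff_subset hK2 Finset.sdiff_subset
    (fun v hv => (mem_NN.1 (hP hv)).1) ?_ ?_ ?_ ?_ ?_ ?_ (by rw [hcard]; exact hodd) qb qa
    (by rw [hy, hk]; exact n1) (by rw [hy, hk]; exact n2) (by rw [hy, hk]; exact n3)
    (by rw [hcard]; exact n4) (by rw [hcard]; exact n5) (by rw [hcard, hy, hk, hp]; exact n6)
  · intro v hv; rw [mem_YY] at hv; grind
  · intro v hv; grind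
  · intro v hv; grind
  · intro v hv; grind
  · intro v hv; rw [mem_YY]; grind
  · intro v hv; grind

theorem disp_three {F : Finset (Sym2 V)} {π : V → ℕ} (hH : Hyp F) (hF : ND F) {a b d : V}
    (ha : a ∈ EE F π) (hb : b ∈ NN F π a) (hd : d ∈ NN F π a) (hbd : b ≠ d)
    {T Td K P Q : Finset V} (hT : T ⊆ YY F π a b) (hTd : Td ⊆ YY F π a d)
    (hK : K ⊆ NN F π a ∩ NN F π b) (hdK : d ∉ K)
    (hP : P ⊆ NN F π a) (hbP : b ∉ P) (hdP : d ∉ P) (hPK : ∀ v ∈ K, v ∉ P)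
    (hQ : Q ⊆ YY F π a b ∪ YY F π a d)
    (hTTd : ∀ v ∈ T, v ∉ Td) (hTQ : ∀ v ∈ T, v ∉ Q) (hTdQ : ∀ v ∈ Td, v ∉ Q)
    (hcb : ∀ v ∈ YY F π a b, v ∈ T ∨ v ∈ Td ∨ v ∈ Q)
    (hcd : ∀ v ∈ YY F π a d, v ∈ T ∨ v ∈ Td ∨ v ∈ Q)
    (s t y k p r z1 z2 q1 q2 qa : ℕ)
    (hs : (NN F π a).card = s + 2 + k + p) (ht : T.card = t) (hy : Td.card = y) (hk : K.card = k)
    (hp : P.card = p) (hr : Q.card = r) (hodd : s % 2 = 1)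
    (hz1 : y % 2 = 0 → 1 ≤ z1) (hz2 : (T ∩ NN F π d).card ≤ z2)
    (n1 : (t + z1) / 2 + k ≤ 3 * q1)
    (n2 : 1 + (t + z1) / 2 ≤ t + (t + k) % 2)
    (n3 : q1 + (t + z1) / 2 ≤ t + (t + k) % 2)
    (m1 : (y + z2) / 2 ≤ 3 * q2)
    (m2 : 1 + (y + z2) / 2 ≤ y + y % 2)
    (m3 : q2 + (y + z2) / 2 ≤ y + y % 2)
    (n4 : s / 2 ≤ 3 * qa) (n5 : qa ≤ s - s / 2 + 1)
    (n6 : 6 * (q1 + q2 + qa) + 2 * (p + r) ≤ t + k + y + s + 1 + (t + k) % 2 + y % 2) :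
    Goal F π := by
  have hK1 : ∀ v ∈ K, v ∈ NN F π a := fun v hv => (Finset.mem_inter.1 (hK hv)).1
  have hK2 : ∀ v ∈ K, v ∈ NN F π b := fun v hv => (Finset.mem_inter.1 (hK hv)).2
  have haa := not_mem_NN (π := π) hF a
  have hbb := not_mem_NN (π := π) hF b
  have hdd := not_mem_NN (π := π) hF d
  have hbK : b ∉ K := fun h => hbb (hK2 b h)
  have hcard : (NN F π a \ insert b (insert d (K ∪ P))).card = s := by
    rw [Finset.card_sdiff_of_subset, Finset.card_insert_of_notMem, Finset.card_insert_of_notMem,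
      Finset.card_union_of_disjoint]
    · omega
    · rw [Finset.disjoint_left]; exact hPK
    · grind
    · grind
    · grind
  have hT' : ∀ v ∈ T, v ∈ NN F π b ∧ v ≠ a ∧ v ∉ NN F π a := fun v hv => mem_YY.1 (hT hv)
  have hTd' : ∀ v ∈ Td, v ∈ NN F π d ∧ v ≠ a ∧ v ∉ NN F π a := fun v hv => mem_YY.1 (hTd hv)
  have hQ' : ∀ v ∈ Q, (v ∈ NN F π b ∨ v ∈ NN F π d) ∧ v ≠ a ∧ v ∉ NN F π a := by
    intro v hv
    rcases Finset.mem_union.1 (hQ hv) with h | h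
    · have := mem_YY.1 h; tauto
    · have := mem_YY.1 h; tauto
  have hPQ : (P ∪ Q).card = p + r := by
    rw [Finset.card_union_of_disjoint, hp, hr]
    rw [Finset.disjoint_left]; intro v h1 h2
    exact (hQ' v h2).2.2 (hP h1)
  have hab : a ≠ b := by rintro rfl; exact haa hb
  have had : a ≠ d := by rintro rfl; exact haa hd
  refine three_star (T := T) (K := K) (Td := Td) (Ta := NN F π a \ insert b (insert d (K ∪ P)))
    (P := P ∪ Q) (a := a) (b := b) (d := d)
    hH hF ha (mem_NN.1 hb).1 (mem_NN.1 hd).1 hab had hbd (fun v hv => (hT' v hv).1) hK2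
    (fun v hv => (hTd' v hv).1) Finset.sdiff_subset
    ?_ ?_ ?_ ?_ ?_ ?_ ?_ ?_ ?_ (by rw [hcard]; exact hodd) z1 z2 q1 q2 qa
    (by rw [hy]; exact hz1) hz2
    (by rw [ht, hk]; exact n1) (by rw [ht, hk]; exact n2) (by rw [ht, hk]; exact n3)
    (by rw [hy]; exact m1) (by rw [hy]; exact m2) (by rw [hy]; exact m3)
    (by rw [hcard]; exact n4) (by rw [hcard]; exact n5) (by rw [hcard, hy, hk, ht, hPQ]; exact n6)
  · intro v hv
    rcases Finset.mem_union.1 hv with h | h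
    · exact (mem_NN.1 (hP h)).1
    · rcases (hQ' v h).1 with h | h
      · exact (mem_NN.1 h).1
      · exact (mem_NN.1 h).1
  · intro v hv; have := hT' v hv; grind
  · intro v hv; grind
  · intro v hv; have := hTd' v hv; grind
  · intro v hv; grind
  · intro v hv
    rcases Finset.mem_union.1 hv with h | h
    · grind
    · have := hQ' v h; grind
  · intro v hv
    have h1 := hcb v
    rw [mem_YY] at h1; grind
  · intro v hv
    have h1 := hcd v
    rw [mem_YY] at h1; grind
  · intro v hv; grind

end PD

namespace PD
variable {V : Type*} [DecidableEq V] [Fintype V]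

theorem disp3 {F : Finset (Sym2 V)} {π : V → ℕ} (hH : Hyp F) (hF : ND F) {a b : V}
    (ha : a ∈ EE F π) (hb : b ∈ NN F π a) (hs : (NN F π a).card % 6 = 3)
    (hsb : (NN F π b).card % 6 = 3 ∨ (NN F π b).card % 6 = 4)
    (hy : 0 < (YY F π a b).card) : Goal F π := by
  by_cases h23 : (YY F π a b).card % 6 = 2 ∨ (YY F π a b).card % 6 = 3
  · exact disp_edge hH hF ha hb (Or.inl hs) h23
  have hc := card_YY hF ha hb
  have hbb := not_mem_NN (π := π) hF b
  by_cases h4 : (YY F π a b).card % 6 = 4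
  · obtain ⟨i, hi⟩ : (NN F π a ∩ NN F π b).Nonempty := Finset.card_pos.1 (by omega)
    refine disp_two (K := {i}) (P := ∅) hH hF ha hb (by simpa using hi) (by simp) (by simp)
      (by simp) ((NN F π a).card - 2) _ 1 0 ((YY F π a b).card / 6 + 1) ((NN F π a).card / 6)
      (by omega) rfl (by simp) (by simp) (by omega) (by omega) (by omega) (by omega) (by omega)
      (by omega) (by omega)
  · obtain ⟨z, hz⟩ : ((NN F π a).erase b).Nonempty := Finset.card_pos.1 (by
      rw [Finset.card_erase_of_mem hb]; omega)
    rw [Finset.mem_erase] at hz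
    refine disp_two (K := ∅) (P := {z}) hH hF ha hb (by simp) (by simpa using hz.2)
      (by simpa using hz.1.symm)
      (by simp) ((NN F π a).card - 2) _ 0 1 (((YY F π a b).card + 1) / 6) ((NN F π a).card / 6)
      (by omega) rfl (by simp) (by simp) (by omega) (by omega) (by omega) (by omega) (by omega)
      (by omega) (by omega)

theorem disp4 {F : Finset (Sym2 V)} {π : V → ℕ} (hH : Hyp F) (hF : ND F) {a b : V}
    (ha : a ∈ EE F π) (hb : b ∈ NN F π a) (hs : (NN F π a).card % 6 = 4)
    (hsb : (NN F π b).card % 6 = 3 ∨ (NN F π b).card % 6 = 4)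
    (hy : (YY F π a b).card % 6 ≠ 0) : Goal F π := by
  by_cases h23 : (YY F π a b).card % 6 = 2 ∨ (YY F π a b).card % 6 = 3
  · exact disp_edge hH hF ha hb (Or.inr hs) h23
  have hc := card_YY hF ha hb
  have hbb := not_mem_NN (π := π) hF b
  by_cases h1 : (YY F π a b).card % 6 = 1
  · refine disp_two (K := ∅) (P := ∅) hH hF ha hb (by simp) (by simp) (by simp)
      (by simp) ((NN F π a).card - 1) _ 0 0 ((YY F π a b).card / 6) ((NN F π a).card / 6 + 1)
      (by omega) rfl (by simp) (by simp) (by omega) (by omega) (by omega) (by omega) (by omega)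
      (by omega) (by omega)
  · obtain ⟨i, hi⟩ : (NN F π a ∩ NN F π b).Nonempty := Finset.card_pos.1 (by omega)
    have hi' := Finset.mem_inter.1 hi
    have hib : i ≠ b := by rintro rfl; exact hbb hi'.2
    obtain ⟨z, hz⟩ : (((NN F π a).erase b).erase i).Nonempty := Finset.card_pos.1 (by
      rw [Finset.card_erase_of_mem (Finset.mem_erase.2 ⟨hib, hi'.1⟩),
        Finset.card_erase_of_mem hb]; omega)
    rw [Finset.mem_erase, Finset.mem_erase] at hz
    refine disp_two (K := {i}) (P := {z}) hH hF ha hb (by simpa using hi) (by simpa using hz.2.2)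
      (by simpa using hz.2.1.symm)
      (by simpa using hz.1.symm) ((NN F π a).card - 3) _ 1 1 ((YY F π a b).card / 6 + 1)
      ((NN F π a).card / 6)
      (by omega) rfl (by simp) (by simp) (by omega) (by omega) (by omega) (by omega) (by omega)
      (by omega) (by omega)

theorem disp5 {F : Finset (Sym2 V)} {π : V → ℕ} (hH : Hyp F) (hF : ND F) {a b d : V}
    (ha : a ∈ EE F π) (hb : b ∈ NN F π a) (hd : d ∈ NN F π a) (hbd : b ≠ d)
    (hs : (NN F π a).card % 6 = 4) (hsb : (NN F π b).card % 6 = 4)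
    (hyb : (YY F π a b).card % 6 = 0) (hyd : (YY F π a d).card % 6 = 0)
    (hyd0 : 0 < (YY F π a d).card)
    (hne : 0 < (YY F π a b \ YY F π a d).card) : Goal F π := by
  have hc := card_YY hF ha hb
  have hbb := not_mem_NN (π := π) hF b
  obtain ⟨z, hz⟩ : (((NN F π a).erase b).erase d).Nonempty := Finset.card_pos.1 (by
      rw [Finset.card_erase_of_mem (Finset.mem_erase.2 ⟨hbd.symm, hd⟩),
        Finset.card_erase_of_mem hb]; omega)
  rw [Finset.mem_erase, Finset.mem_erase] at hz
  have hz2 : (YY F π a b \ YY F π a d ∩ NN F π d).card = 0 := by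
    rw [Finset.card_eq_zero, Finset.eq_empty_iff_forall_notMem]
    intro v hv
    rw [Finset.mem_inter, Finset.mem_sdiff, mem_YY, mem_YY] at hv
    tauto
  have hTT : ∀ v ∈ YY F π a b \ YY F π a d, v ∉ YY F π a d := fun v hv => (Finset.mem_sdiff.1 hv).2
  have hcb : ∀ v ∈ YY F π a b, v ∈ YY F π a b \ YY F π a d ∨ v ∈ YY F π a d ∨ v ∈ (∅ : Finset V) := by
    intro v hv; rw [Finset.mem_sdiff]; tauto
  set t := (YY F π a b \ YY F π a d).card with ht
  by_cases h1 : t % 6 = 1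
  · obtain ⟨y, hy⟩ := Finset.card_pos.1 hyd0
    have hce := Finset.card_erase_of_mem hy
    refine disp_three (b := b) (d := d) (T := YY F π a b \ YY F π a d)
      (Td := (YY F π a d).erase y) (K := ∅)
      (P := {z}) (Q := {y}) hH hF ha hb hd hbd Finset.sdiff_subset (Finset.erase_subset _ _)
      (by simp) (by simp) (by simpa using hz.2.2) (by simpa using hz.2.1.symm)
      (by simpa using hz.1.symm) (by simp) (by simp [hy])
      (fun v hv h => hTT v hv (Finset.mem_of_mem_erase h))
      (by intro v hv h; rw [Finset.mem_singleton] at h; rw [h] at hv; exact hTT y hv hy)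
      (by intro v hv h; rw [Finset.mem_singleton] at h; exact Finset.ne_of_mem_erase hv h)
      (by intro v hv; rw [Finset.mem_sdiff, Finset.mem_erase, Finset.mem_singleton]; tauto)
      (by intro v hv; rw [Finset.mem_erase, Finset.mem_singleton]; tauto)
      ((NN F π a).card - 3) t _ 0 1 1 0 0 (t / 6) ((YY F π a d).card / 6) ((NN F π a).card / 6)
      (by omega) rfl hce (by simp) (by simp) (by simp) (by omega) (by omega) hz2.le
      (by omega) (by omega) (by omega) (by omega) (by omega) (by omega) (by omega) (by omega)
      (by omega)
  by_cases h05 : t % 6 = 0 ∨ t % 6 = 5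
  · refine disp_three (b := b) (d := d) (T := YY F π a b \ YY F π a d)
      (Td := YY F π a d) (K := ∅)
      (P := {z}) (Q := ∅) hH hF ha hb hd hbd Finset.sdiff_subset subset_rfl
      (by simp) (by simp) (by simpa using hz.2.2) (by simpa using hz.2.1.symm)
      (by simpa using hz.1.symm) (by simp) (by simp) hTT (by simp) (by simp) hcb
      (by intro v hv; tauto)
      ((NN F π a).card - 3) t _ 0 1 0 1 0 ((t + 1) / 6) ((YY F π a d).card / 6)
      ((NN F π a).card / 6)
      (by omega) rfl rfl (by simp) (by simp) (by simp) (by omega) (by omega) hz2.le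
      (by omega) (by omega) (by omega) (by omega) (by omega) (by omega) (by omega) (by omega)
      (by omega)
  · obtain ⟨i, hi⟩ : ((NN F π a ∩ NN F π b).erase d).Nonempty := Finset.card_pos.1 (by
      have := Finset.pred_card_le_card_erase (s := NN F π a ∩ NN F π b) (a := d)
      omega)
    rw [Finset.mem_erase] at hi
    refine disp_three (b := b) (d := d) (T := YY F π a b \ YY F π a d)
      (Td := YY F π a d) (K := {i})
      (P := ∅) (Q := ∅) hH hF ha hb hd hbd Finset.sdiff_subset subset_rfl
      (by simpa using hi.2) (by simpa using hi.1.symm) (by simp) (by simp)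
      (by simp) (by simp) (by simp) hTT (by simp) (by simp) hcb
      (by intro v hv; tauto)
      ((NN F π a).card - 3) t _ 1 0 0 1 0 (t / 6 + 1) ((YY F π a d).card / 6)
      ((NN F π a).card / 6)
      (by omega) rfl rfl (by simp) (by simp) (by simp) (by omega) (by omega) hz2.le
      (by omega) (by omega) (by omega) (by omega) (by omega) (by omega) (by omega) (by omega)
      (by omega)

theorem disp6 {F : Finset (Sym2 V)} {π : V → ℕ} (hH : Hyp F) (hF : ND F) {a b d : V}
    (ha : a ∈ EE F π) (hb : b ∈ NN F π a) (hd : d ∈ NN F π a) (hbd : b ≠ d)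
    (hs : (NN F π a).card % 6 = 4)
    (hyd : (YY F π a d).card % 6 = 0)
    (hyd0 : 0 < (YY F π a d).card)
    (he : YY F π a b = YY F π a d) : Goal F π := by
  obtain ⟨z, hz⟩ : (((NN F π a).erase b).erase d).Nonempty := Finset.card_pos.1 (by
      rw [Finset.card_erase_of_mem (Finset.mem_erase.2 ⟨hbd.symm, hd⟩),
        Finset.card_erase_of_mem hb]; omega)
  rw [Finset.mem_erase, Finset.mem_erase] at hz
  obtain ⟨y, hy⟩ := Finset.card_pos.1 hyd0
  have hce := Finset.card_erase_of_mem hy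
  have hcov : ∀ v ∈ YY F π a d, v ∈ ({y} : Finset V) ∨ v ∈ (YY F π a d).erase y ∨
      v ∈ (∅ : Finset V) := by
    intro v hv; rw [Finset.mem_singleton, Finset.mem_erase]; tauto
  refine disp_three (b := b) (d := d) (T := {y})
      (Td := (YY F π a d).erase y) (K := ∅)
      (P := {z}) (Q := ∅) hH hF ha hb hd hbd (by simpa [he] using hy) (Finset.erase_subset _ _)
      (by simp) (by simp) (by simpa using hz.2.2) (by simpa using hz.2.1.symm)
      (by simpa using hz.1.symm) (by simp) (by simp) (by simp) (by simp) (by simp)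
      (by rw [he]; exact hcov) hcov
      ((NN F π a).card - 3) 1 _ 0 1 0 0 1 0 ((YY F π a d).card / 6) ((NN F π a).card / 6)
      (by omega) (by simp) hce (by simp) (by simp) (by simp) (by omega) (by omega)
      ((Finset.card_le_card Finset.inter_subset_left).trans (by simp))
      (by omega) (by omega) (by omega) (by omega) (by omega) (by omega) (by omega) (by omega)
      (by omega)

theorem sub_of_YY {F : Finset (Sym2 V)} {π : V → ℕ} {a x : V} (h : (YY F π a x).card = 0) :
    ∀ v ∈ NN F π x, v = a ∨ v ∈ NN F π a := by
  intro v hv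
  by_contra hh
  rw [Finset.card_eq_zero, Finset.eq_empty_iff_forall_notMem] at h
  exact h v (mem_YY.2 (by tauto))

theorem case_adj {F : Finset (Sym2 V)} {π : V → ℕ} (hH : Hyp F) (hF : ND F) {a : V}
    (ha : a ∈ EE F π) (hne : (NN F π a).Nonempty) : Goal F π := by
  by_contra hG
  have hmod : ∀ v ∈ EE F π, (NN F π v).Nonempty →
      (NN F π v).card % 6 = 3 ∨ (NN F π v).card % 6 = 4 := by
    intro v hv hvn
    by_contra hh
    exact hG (disp_single hH hF hv hvn (by omega))
  have hmod' : ∀ v ∈ EE F π, ∀ x ∈ NN F π v,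
      (NN F π x).card % 6 = 3 ∨ (NN F π x).card % 6 = 4 := by
    intro v hv x hx
    exact hmod x (mem_NN.1 hx).1 ⟨v, NN_symm hv hx⟩
  have h3 : ∀ v ∈ EE F π, (NN F π v).Nonempty → (NN F π v).card % 6 = 4 := by
    intro v hv hvn
    rcases hmod v hv hvn with h | h
    · exfalso
      apply hG
      by_cases hy : ∃ b ∈ NN F π v, 0 < (YY F π v b).card
      · obtain ⟨b, hb, hy⟩ := hy
        exact disp3 hH hF hv hb h (hmod' v hv b hb) hy
      · push Not at hy
        exact dtrick (T := NN F π v) (P := ∅) hH hF hv subset_rfl (by simp) (by simp) (by simp)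
          (by tauto) ((NN F π v).card / 6) (by omega) (by simp)
          (fun x hx => sub_of_YY (Nat.le_zero.1 (hy x hx)))
    · exact h
  have hs := h3 a ha hne
  have h0 : ∀ b ∈ NN F π a, (YY F π a b).card % 6 = 0 := by
    intro b hb
    by_contra hh
    exact hG (disp4 hH hF ha hb hs (hmod' a ha b hb) hh)
  by_cases h2 : ∃ b ∈ NN F π a, ∃ d ∈ NN F π a, b ≠ d ∧ 0 < (YY F π a b).card ∧
      0 < (YY F π a d).card
  · obtain ⟨b, hb, d, hd, hbd, hyb, hyd⟩ := h2
    apply hG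
    by_cases e1 : 0 < (YY F π a b \ YY F π a d).card
    · exact disp5 hH hF ha hb hd hbd hs (h3 b (mem_NN.1 hb).1 ⟨a, NN_symm ha hb⟩)
        (h0 b hb) (h0 d hd) hyd e1
    by_cases e2 : 0 < (YY F π a d \ YY F π a b).card
    · exact disp5 hH hF ha hd hb hbd.symm hs (h3 d (mem_NN.1 hd).1 ⟨a, NN_symm ha hd⟩)
        (h0 d hd) (h0 b hb) hyb e2
    have e1' : YY F π a b \ YY F π a d = ∅ := Finset.card_eq_zero.1 (by omega)
    have e2' : YY F π a d \ YY F π a b = ∅ := Finset.card_eq_zero.1 (by omega)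
    exact disp6 hH hF ha hb hd hbd hs (h0 d hd) hyd
      (subset_antisymm (Finset.sdiff_eq_empty_iff_subset.1 e1')
        (Finset.sdiff_eq_empty_iff_subset.1 e2'))
  · push Not at h2
    obtain ⟨z, hz, hzy⟩ : ∃ z ∈ NN F π a, ∀ x ∈ NN F π a, x ≠ z → (YY F π a x).card = 0 := by
      by_cases hy : ∃ b ∈ NN F π a, 0 < (YY F π a b).card
      · obtain ⟨b, hb, hy⟩ := hy
        exact ⟨b, hb, fun x hx hxb => Nat.le_zero.1 (h2 b hb x hx hxb.symm hy)⟩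
      · push Not at hy
        obtain ⟨z, hz⟩ := hne
        exact ⟨z, hz, fun x hx _ => Nat.le_zero.1 (hy x hx)⟩
    apply hG
    have hc := Finset.card_erase_of_mem hz
    exact dtrick (T := (NN F π a).erase z) (P := {z}) hH hF ha (Finset.erase_subset _ _)
      (by intro v hv; rw [Finset.mem_singleton.1 hv]; exact (mem_NN.1 hz).1)
      (by rw [Finset.mem_singleton]; rintro rfl; exact not_mem_NN hF _ hz)
      (by intro v hv; rw [Finset.mem_singleton]; exact Finset.ne_of_mem_erase hv)
      (by intro v hv; rw [Finset.mem_erase, Finset.mem_singleton]; tauto)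
      ((NN F π a).card / 6) (by omega) (by simp)
      (fun x hx => sub_of_YY (hzy x (Finset.mem_of_mem_erase hx) (Finset.ne_of_mem_erase hx)))

theorem main (n : ℕ) : ∀ F : Finset (Sym2 V), F.card = n → ND F → ∀ π, Goal F π := by
  induction n using Nat.strong_induction_on with
  | _ n ih =>
  intro F hn hF π
  have hH : Hyp F := fun F' h hF' π => ih F'.card (hn ▸ h) F' rfl hF' π
  by_cases h0 : F = ∅
  · rw [h0]; exact goal_empty π
  by_cases hE : EE F π = ∅
  · by_cases hv : ∃ v, 0 < dg F v ∧ Even (dg F v + π v)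
    · obtain ⟨v, hv, h⟩ := hv
      exact case_even hH hF hE hv h
    · push Not at hv
      obtain ⟨e, he⟩ := Finset.nonempty_iff_ne_empty.2 h0
      induction e using Sym2.ind with
      | _ x y => exact case_odd hH hF (dg_pos he) (fun v h => by simpa using hv v h)
  · obtain ⟨a, ha⟩ := Finset.nonempty_iff_ne_empty.2 hE
    by_cases hind : ∀ v ∈ EE F π, NN F π v = ∅
    · exact case_indep hH hF ha hind
    · push Not at hind
      obtain ⟨v, hv, h⟩ := hind
      exact case_adj hH hF hv (by simpa [Finset.nonempty_iff_ne_empty] using h)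

end PD

namespace PD

theorem walk_of {V : Type*} (G : SimpleGraph V) : ∀ (l : List V) (x : V),
    (∀ e ∈ edg (x :: l), e ∈ G.edgeSet) →
    ∃ (b : V) (w : G.Walk x b), w.support = x :: l ∧ (w.edges : Multiset (Sym2 V)) = edg (x :: l)
  | [], x, _ => ⟨x, SimpleGraph.Walk.nil, by simp, by simp [edg]⟩
  | y :: l, x, h => by
    obtain ⟨b, w, h1, h2⟩ := walk_of G l y (fun e he => h e (by simp [edg, he]))
    have hadj : G.Adj x y := h s(x, y) (by simp [edg])
    refine ⟨b, SimpleGraph.Walk.cons hadj w, by simp [h1], ?_⟩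
    rw [SimpleGraph.Walk.edges_cons, ← Multiset.cons_coe, h2, edg]

theorem walks_of {V : Type*} (G : SimpleGraph V) : ∀ L : List (List V),
    (∀ l ∈ L, l ≠ [] ∧ l.Nodup) → ((L.map edg).sum).Nodup →
    (∀ e ∈ (L.map edg).sum, e ∈ G.edgeSet) →
    ∃ M : List (Σ (a : V) (b : V), G.Walk a b), M.length = L.length ∧
      (∀ p ∈ M, p.2.2.IsPath) ∧
      List.Pairwise (fun p q => ∀ e ∈ p.2.2.edges, e ∉ q.2.2.edges) M ∧
      (∀ e : Sym2 V, e ∈ (L.map edg).sum ↔ ∃ p ∈ M, e ∈ p.2.2.edges)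
  | [], _, _, _ => ⟨[], by simp⟩
  | [] :: L, h, _, _ => absurd rfl (h [] (by simp)).1
  | (x :: l) :: L, h, hn, he => by
    rw [List.map_cons, List.sum_cons] at hn he
    obtain ⟨hn1, hn2, hn3⟩ := Multiset.nodup_add.1 hn
    obtain ⟨M, m1, m2, m3, m4⟩ := walks_of G L (fun l hl => h l (by simp [hl])) hn2
      (fun e h => he e (by simp [h]))
    obtain ⟨b, w, w1, w2⟩ := walk_of G l x (fun e h => he e (by simp [h]))
    have hw : ∀ e, e ∈ w.edges ↔ e ∈ edg (x :: l) := by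
      intro e; rw [← w2, Multiset.mem_coe]
    refine ⟨⟨x, b, w⟩ :: M, by simp [m1], ?_, ?_, ?_⟩
    · intro p hp
      rcases List.mem_cons.1 hp with rfl | hp
      · rw [SimpleGraph.Walk.isPath_def]
        simp only [w1]
        exact (h (x :: l) (by simp)).2
      · exact m2 p hp
    · refine List.pairwise_cons.2 ⟨?_, m3⟩
      intro q hq e h1 h2
      exact Multiset.disjoint_left.1 hn3 ((hw e).1 h1) ((m4 e).2 ⟨q, hq, h2⟩)
    · intro e
      rw [List.map_cons, List.sum_cons, Multiset.mem_add, m4, ← hw]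
      simp

theorem final (n : ℕ) (G : SimpleGraph (Fin n)) [DecidableRel G.Adj]
    (u g : ℕ)
    (hu : u = (Finset.univ.filter fun v => Odd (G.degree v)).card)
    (hg : g = (Finset.univ.filter fun v =>
      Even (G.degree v) ∧ 0 < G.degree v).card) :
    ∃ L : List (Σ (a : Fin n) (b : Fin n), G.Walk a b),
      L.length ≤ u / 2 + 2 * g / 3 ∧
      (∀ p ∈ L, p.2.2.IsPath) ∧
      List.Pairwise (fun p q => ∀ e ∈ p.2.2.edges, e ∉ q.2.2.edges) L ∧
      (∀ e : Sym2 (Fin n), e ∈ G.edgeSet ↔ ∃ p ∈ L, e ∈ p.2.2.edges) := by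
  have hND : ND G.edgeFinset := by
    intro v h
    rw [SimpleGraph.mem_edgeFinset, SimpleGraph.mem_edgeSet] at h
    exact G.loopless.irrefl v h
  have hdg : ∀ v, dg G.edgeFinset v = G.degree v := by
    intro v
    rw [dg, ← SimpleGraph.card_neighborFinset_eq_degree]
    congr 1
    ext x
    simp
  obtain ⟨N, hN, L, hL, hE, -, hc⟩ := main _ G.edgeFinset rfl hND (fun _ => 0)
  have hPhi : Phi G.edgeFinset (fun _ => 0) = 3 * u + 4 * g := by
    have : ∀ v, wt G.edgeFinset (fun _ => 0) v = 3 * (if Odd (G.degree v) then 1 else 0) +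
        4 * (if Even (G.degree v) ∧ 0 < G.degree v then 1 else 0) := by
      intro v
      simp only [wt, hdg, ← Nat.not_odd_iff_even]
      by_cases h1 : Odd (G.degree v)
      · simp [h1]
      · by_cases h2 : G.degree v = 0
        · simp [h2]
        · simp [h1, h2, Nat.pos_of_ne_zero h2]
    rw [Phi, Finset.sum_congr rfl (fun v _ => this v), Finset.sum_add_distrib, ← Finset.mul_sum,
      ← Finset.mul_sum, hu, hg, Finset.card_filter, Finset.card_filter]
  have hev : Even u := by rw [hu]; exact G.even_card_odd_degree_vertices
  obtain ⟨k, hk⟩ := hev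
  induction L using Quotient.inductionOn with
  | _ L =>
  have hE' : (L.map edg).sum = G.edgeFinset.val := by
    rw [← hE]; simp [EL]
  obtain ⟨M, m1, m2, m3, m4⟩ := walks_of G L (fun l hl => hL l (by simpa using hl))
    (by rw [hE']; exact G.edgeFinset.nodup)
    (by intro e he; rw [hE'] at he; exact SimpleGraph.mem_edgeFinset.1 he)
  refine ⟨M, ?_, m2, m3, ?_⟩
  · have : L.length ≤ N := by simpa using hc
    omega
  · intro e
    rw [← m4, hE', Finset.mem_val, SimpleGraph.mem_edgeFinset]

end PD

/-- Dean–Kouider, Yan: if a simple graph G (possibly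
disconnected) has u vertices of odd degree and g nonisolated vertices of even
degree, then E(G) can be partitioned into at most u/2 + ⌊(2/3)g⌋ paths. -/
theorem stmt_11 (n : ℕ) (G : SimpleGraph (Fin n)) [DecidableRel G.Adj]
    (u g : ℕ)
    (hu : u = (Finset.univ.filter fun v => Odd (G.degree v)).card)
    (hg : g = (Finset.univ.filter fun v =>
      Even (G.degree v) ∧ 0 < G.degree v).card) :
    ∃ L : List (Σ (a : Fin n) (b : Fin n), G.Walk a b),
      L.length ≤ u / 2 + 2 * g / 3 ∧
      (∀ p ∈ L, p.2.2.IsPath) ∧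
      List.Pairwise (fun p q => ∀ e ∈ p.2.2.edges, e ∉ q.2.2.edges) L ∧
      (∀ e : Sym2 (Fin n), e ∈ G.edgeSet ↔ ∃ p ∈ L, e ∈ p.2.2.edges) := PD.final n G u g hu hg
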